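/- There are exactly 2962 conjugacy classes of finite-index subgroups Γ̄ of PSL(2,ℤ) that have genus zero and satisfy n + 3·e₂(Γ̄) + 2·e₃(Γ̄) = 24, where n is the index of Γ̄. -/

import Mathlib

open Matrix

/-- `SL(2,ℤ)`: the group of 2×2 integer matrices of determinant 1. -/
abbrev SL2Z := Matrix.SpecialLinearGroup (Fin 2) ℤ

instance : Fact (Even (Fintype.card (Fin 2))) := ⟨by simp⟩

/-- The subgroup `{±I}` of `SL(2,ℤ)`. -/
def pmOne : Subgroup SL2Z := Subgroup.zpowers (-1 : SL2Z)

instance : pmOne.Normal := by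
  constructor
  intro x hx g
  obtain ⟨n, rfl⟩ := hx
  have h : Commute ((-1 : SL2Z) ^ n) g := (Commute.neg_one_left g).zpow_left n
  refine ⟨n, ?_⟩
  rw [← h.eq, mul_assoc, mul_inv_cancel, mul_one]

/-- `PSL(2,ℤ)`, the modular group, as the quotient of `SL(2,ℤ)` by `{±I}`. -/
abbrev PSL2Z := SL2Z ⧸ pmOne

/-- The natural projection `ξ : SL(2,ℤ) → PSL(2,ℤ)`. -/
def xi : SL2Z →* PSL2Z := QuotientGroup.mk' pmOne

/-- The element `S` of `PSL(2,ℤ)`, the image of `[[0,-1],[1,0]]`. -/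
def Sp : PSL2Z := xi ⟨!![0, -1; 1, 0], by norm_num [Matrix.det_fin_two_of]⟩

/-- The element `T` of `PSL(2,ℤ)`, the image of `[[1,1],[0,1]]`. -/
def Tp : PSL2Z := xi ⟨!![1, 1; 0, 1], by norm_num [Matrix.det_fin_two_of]⟩

/-- The number of left cosets in `PSL(2,ℤ)/Γ` fixed by `g` (for the
left-multiplication action).  For `g = S` this is `e₂(Γ)`, for `g = S*T` it is `e₃(Γ)`. -/
noncomputable def nFix (g : PSL2Z) (Γ : Subgroup PSL2Z) : ℕ :=
  Nat.card {x : PSL2Z ⧸ Γ // g • x = x}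

/-- The number of orbits of the cyclic subgroup generated by `g` on `PSL(2,ℤ)/Γ`.
For `g = S, S*T, T` these are `c₂(Γ), c₃(Γ), h(Γ)` respectively. -/
noncomputable def nOrb (g : PSL2Z) (Γ : Subgroup PSL2Z) : ℕ :=
  Nat.card (MulAction.orbitRel.Quotient (Subgroup.zpowers g) (PSL2Z ⧸ Γ))

/-- `Γ` has genus zero: `c₂(Γ) + c₃(Γ) + h(Γ) = index(Γ) + 2`. -/
def GenusZero (Γ : Subgroup PSL2Z) : Prop :=
  nOrb Sp Γ + nOrb (Sp * Tp) Γ + nOrb Tp Γ = Γ.index + 2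

/-- `Γ` is torsion free: it contains no nontrivial element of finite order. -/
def TorsionFree (Γ : Subgroup PSL2Z) : Prop :=
  ∀ x ∈ Γ, x ≠ 1 → ¬ IsOfFinOrder x

/-- Two subgroups of a group are conjugate. -/
def SubgroupConj {G : Type*} [Group G] (H K : Subgroup G) : Prop :=
  ∃ g : G, Subgroup.map (MulAut.conj g).toMonoidHom H = K

/-- The number of conjugacy classes of subgroups of `PSL(2,ℤ)` satisfying `P`. -/
noncomputable def countClasses (P : Subgroup PSL2Z → Prop) : ℕ :=
  Nat.card (Quot fun A B : {Γ : Subgroup PSL2Z // P Γ} => SubgroupConj A.1 B.1)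

/-- The index of the torsion free subgroup `Γ^tf` associated to `Γ`:
`index(Γ) + 3·e₂(Γ) + 2·e₃(Γ)`. -/
noncomputable def tfIdx (Γ : Subgroup PSL2Z) : ℕ :=
  Γ.index + 3 * nFix Sp Γ + 2 * nFix (Sp * Tp) Γ


namespace K24

abbrev Up : PSL2Z := Sp * Tp

def matS : SL2Z := ⟨!![0, -1; 1, 0], by norm_num [Matrix.det_fin_two_of]⟩
def matT : SL2Z := ⟨!![1, 1; 0, 1], by norm_num [Matrix.det_fin_two_of]⟩

lemma xi_matS : xi matS = Sp := rfl
lemma xi_matT : xi matT = Tp := rfl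

lemma xi_surj : Function.Surjective xi := QuotientGroup.mk'_surjective _

lemma xi_neg_one : xi (-1) = 1 := by
  have : (-1 : SL2Z) ∈ pmOne := Subgroup.mem_zpowers _
  exact (QuotientGroup.eq_one_iff _).2 this

lemma xi_eq {A B : SL2Z} (h : xi A = xi B) : A = B ∨ A = -B := by
  have h1 : B⁻¹ * A ∈ pmOne := by
    rw [← QuotientGroup.eq]; exact h.symm
  obtain ⟨n, hn⟩ := h1
  have hn' : A = B * (-1) ^ n := by
    have hn2 : ((-1 : SL2Z)) ^ n = B⁻¹ * A := hn
    rw [hn2]; group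
  rcases Int.even_or_odd n with he | ho
  · left; rw [hn', he.neg_one_zpow, mul_one]
  · right; rw [hn', ho.neg_one_zpow]; simp

lemma Sp_sq : Sp * Sp = 1 := by
  have : matS * matS = -1 := by
    ext i j; fin_cases i <;> fin_cases j <;> rfl
  rw [← xi_matS, ← map_mul, this, xi_neg_one]

lemma Up_cube : Up * Up * Up = 1 := by
  have : (matS * matT) * (matS * matT) * (matS * matT) = -1 := by
    ext i j; fin_cases i <;> fin_cases j <;> rfl
  rw [Up, ← xi_matS, ← xi_matT, ← map_mul, ← map_mul, ← map_mul, this, xi_neg_one]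

lemma Tp_eq : Tp = Sp * Up := by
  rw [Up, ← mul_assoc, Sp_sq, one_mul]

lemma closure_ST : Subgroup.closure {Sp, Tp} = ⊤ := by
  have h := _root_.SpecialLinearGroup.SL2Z_generators
  have h2 := congrArg (Subgroup.map xi) h
  rw [MonoidHom.map_closure, Subgroup.map_top_of_surjective _ xi_surj, Set.image_pair] at h2
  exact h2

lemma closure_SU : Subgroup.closure {Sp, Up} = ⊤ := by
  rw [eq_top_iff, ← closure_ST, Subgroup.closure_le]
  have hS : Sp ∈ Subgroup.closure {Sp, Up} := Subgroup.subset_closure (by simp)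
  have hU : Up ∈ Subgroup.closure {Sp, Up} := Subgroup.subset_closure (by simp)
  rintro x (rfl | rfl)
  · exact hS
  · show Tp ∈ _
    rw [Tp_eq]; exact mul_mem hS hU

lemma Sp_inv : Sp⁻¹ = Sp := inv_eq_of_mul_eq_one_left Sp_sq
lemma Up_inv : Up⁻¹ = Up * Up := inv_eq_of_mul_eq_one_left Up_cube

/-- Left induction on words in `S` and `U`. -/
lemma gen_induction (P : PSL2Z → Prop) (h1 : P 1) (hS : ∀ g, P g → P (Sp * g))
    (hU : ∀ g, P g → P (Up * g)) (g : PSL2Z) : P g := by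
  have hg : g ∈ Subgroup.closure {Sp, Up} := by rw [closure_SU]; trivial
  induction hg using Subgroup.closure_induction_left with
  | one => exact h1
  | mul_left x hx y hy ih =>
    rcases hx with rfl | rfl
    · exact hS _ ih
    · exact hU _ ih
  | inv_mul_cancel x hx y hy ih =>
    rcases hx with rfl | rfl
    · rw [Sp_inv]; exact hS _ ih
    · rw [Up_inv, mul_assoc]; exact hU _ (hU _ ih)

/-- The orders of the two free factors. -/
abbrev ord (b : Bool) : ℕ := cond b 3 2

/-- The homomorphism from a finite cyclic group given by an element. -/
def cycHom {H : Type*} [Group H] (n : ℕ) (x : H) (hx : x ^ n = 1) :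
    Multiplicative (ZMod n) →* H :=
  AddMonoidHom.toMultiplicativeLeft (ZMod.lift n ⟨zmultiplesHom (Additive H) (Additive.ofMul x), by
    show ((n : ℤ)) • Additive.ofMul x = 0
    rw [natCast_zsmul, ← ofMul_pow, hx]; rfl⟩)

lemma cycHom_gen {H : Type*} [Group H] (n : ℕ) (x : H) (hx : x ^ n = 1) :
    cycHom n x hx (Multiplicative.ofAdd 1) = x := by
  have := ZMod.lift_coe n (⟨zmultiplesHom (Additive H) (Additive.ofMul x), by
    show ((n : ℤ)) • Additive.ofMul x = 0
    rw [natCast_zsmul, ← ofMul_pow, hx]; rfl⟩ : {f : ℤ →+ Additive H // f n = 0}) 1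
  simp only [Int.cast_one] at this
  show Additive.toMul (ZMod.lift n _ 1) = x
  rw [this]
  simp

/-- The generators. -/
def gen {H : Type*} (s u : H) (b : Bool) : H := cond b u s

lemma gen_pow {H : Type*} [Group H] {s u : H} (hs : s * s = 1) (hu : u * u * u = 1) (b : Bool) :
    gen s u b ^ ord b = 1 := by
  cases b
  · simpa [gen, pow_two] using hs
  · simpa [gen, pow_succ] using hu

/-- The homomorphism from the free product. -/
def free {H : Type*} [Group H] {s u : H} (hs : s * s = 1) (hu : u * u * u = 1) :
    Monoid.CoprodI (fun b : Bool => Multiplicative (ZMod (ord b))) →* H :=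
  Monoid.CoprodI.lift fun b => cycHom (ord b) (gen s u b) (gen_pow hs hu b)

lemma free_gen {H : Type*} [Group H] {s u : H} (hs : s * s = 1) (hu : u * u * u = 1) (b : Bool) :
    free hs hu (Monoid.CoprodI.of (i := b) (Multiplicative.ofAdd 1)) = gen s u b := by
  unfold free
  rw [Monoid.CoprodI.lift_of, cycHom_gen]

/-- Ping-pong sets. -/
def XX (b : Bool) : Set PSL2Z :=
  {q | ∀ A : SL2Z, xi A = q → cond b (A 0 0 * A 1 0 < 0) (0 < A 0 0 * A 1 0)}

lemma matS_00 (A : SL2Z) : (matS * A) 0 0 = - A 1 0 := by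
  rw [Matrix.SpecialLinearGroup.coe_mul, Matrix.mul_apply, Fin.sum_univ_two]
  show (0 : ℤ) * A 0 0 + (-1) * A 1 0 = _
  ring

lemma matS_10 (A : SL2Z) : (matS * A) 1 0 = A 0 0 := by
  rw [Matrix.SpecialLinearGroup.coe_mul, Matrix.mul_apply, Fin.sum_univ_two]
  show (1 : ℤ) * A 0 0 + 0 * A 1 0 = _
  ring

lemma matT_00 (A : SL2Z) : (matT * A) 0 0 = A 0 0 + A 1 0 := by
  rw [Matrix.SpecialLinearGroup.coe_mul, Matrix.mul_apply, Fin.sum_univ_two]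
  show (1 : ℤ) * A 0 0 + 1 * A 1 0 = _
  ring

lemma matT_10 (A : SL2Z) : (matT * A) 1 0 = A 1 0 := by
  rw [Matrix.SpecialLinearGroup.coe_mul, Matrix.mul_apply, Fin.sum_univ_two]
  show (0 : ℤ) * A 0 0 + 1 * A 1 0 = _
  ring

lemma pp_S {q : PSL2Z} (h : q ∈ XX true) : Sp * q ∈ XX false := by
  intro A hA
  have h1 : xi (matS * A) = q := by rw [map_mul, hA, xi_matS, ← mul_assoc, Sp_sq, one_mul]
  have := h _ h1
  simp only [cond_true, cond_false, matS_00, matS_10] at this ⊢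
  linarith

lemma pp_U {q : PSL2Z} (h : q ∈ XX false) : Up * q ∈ XX true := by
  intro A hA
  have h1 : xi ((matS * matT) * ((matS * matT) * A)) = q := by
    simp only [map_mul, hA, xi_matS, xi_matT]
    show Up * (Up * (Up * q)) = q
    rw [← mul_assoc, ← mul_assoc, Up_cube, one_mul]
  have := h _ h1
  simp only [cond_true, cond_false, mul_assoc, matS_00, matS_10, matT_00, matT_10] at this ⊢
  nlinarith [sq_nonneg (A 0 0), sq_nonneg (A 1 0)]

lemma pp_UU {q : PSL2Z} (h : q ∈ XX false) : Up * Up * q ∈ XX true := by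
  intro A hA
  have h1 : xi ((matS * matT) * A) = q := by
    simp only [map_mul, hA, xi_matS, xi_matT]
    show Up * (Up * Up * q) = q
    rw [← mul_assoc, ← mul_assoc, Up_cube, one_mul]
  have := h _ h1
  simp only [cond_true, cond_false, mul_assoc, matS_00, matS_10, matT_00, matT_10] at this ⊢
  nlinarith [sq_nonneg (A 0 0), sq_nonneg (A 1 0)]

lemma XX_nonempty_false : (XX false).Nonempty := by
  refine ⟨xi ⟨!![1, 0; 1, 1], by norm_num [Matrix.det_fin_two_of]⟩, ?_⟩
  intro A hA
  rcases xi_eq hA with rfl | rfl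
  · show (0 : ℤ) < 1 * 1
    norm_num
  · show (0 : ℤ) < -1 * -1
    norm_num

lemma free_bij : Function.Bijective (free Sp_sq Up_cube) := by
  constructor
  · unfold free
    have key : ∀ b : Bool, ∀ h : Multiplicative (ZMod (ord b)), h ≠ 1 →
        (b = false → cycHom (ord b) (gen Sp Up b) (gen_pow Sp_sq Up_cube b) h = Sp) ∧
        (b = true → cycHom (ord b) (gen Sp Up b) (gen_pow Sp_sq Up_cube b) h = Up ∨
          cycHom (ord b) (gen Sp Up b) (gen_pow Sp_sq Up_cube b) h = Up * Up) := by
      intro b h hh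
      have h3 := cycHom_gen (ord b) (gen Sp Up b) (gen_pow Sp_sq Up_cube b)
      cases b
      · refine ⟨fun _ => ?_, by simp⟩
        have aux : ∀ h : Multiplicative (ZMod 2), h ≠ 1 → h = Multiplicative.ofAdd 1 := by decide
        have : h = Multiplicative.ofAdd 1 := aux h hh
        rw [this, h3]; rfl
      · refine ⟨by simp, fun _ => ?_⟩
        have : h = Multiplicative.ofAdd 1 ∨ h = Multiplicative.ofAdd 1 * Multiplicative.ofAdd 1 := by
          have aux : ∀ h : Multiplicative (ZMod 3), h ≠ 1 → h = Multiplicative.ofAdd 1 ∨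
            h = Multiplicative.ofAdd 1 * Multiplicative.ofAdd 1 := by decide
          exact aux h hh
        rcases this with rfl | rfl
        · left; rw [h3]; rfl
        · right; rw [map_mul, h3]; rfl
    refine Monoid.CoprodI.lift_injective_of_ping_pong _ (Or.inr ⟨true, ?_⟩) XX ?_ ?_ ?_
    · have : Cardinal.mk (Multiplicative (ZMod (ord true))) = 3 := by
        have h2 : Cardinal.mk (ZMod 3) = 3 := by simp
        exact h2
      rw [this]
    · have h0 := XX_nonempty_false
      intro b
      cases b
      · exact h0
      · obtain ⟨q, hq⟩ := h0
        exact ⟨_, pp_U hq⟩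
    · have hd : Disjoint (XX false) (XX true) := by
        rw [Set.disjoint_left]
        intro q h1 h2
        obtain ⟨A, rfl⟩ := xi_surj q
        have h3 := h1 A rfl
        have h4 := h2 A rfl
        simp at h3 h4
        linarith
      intro b c hbc
      cases b <;> cases c
      · exact absurd rfl hbc
      · exact hd
      · exact hd.symm
      · exact absurd rfl hbc
    · intro b c hbc h hh
      rintro _ ⟨q, hq, rfl⟩
      have hk := key b h hh
      cases b <;> cases c
      · exact absurd rfl hbc
      · simp only [hk.1 rfl, smul_eq_mul]; exact pp_S hq
      · rcases hk.2 rfl with h | h <;> simp only [h, smul_eq_mul]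
        · exact pp_U hq
        · exact pp_UU hq
      · exact absurd rfl hbc
  · rw [← MonoidHom.range_eq_top, eq_top_iff, ← closure_SU, Subgroup.closure_le]
    rintro x (rfl | rfl)
    · exact ⟨_, free_gen Sp_sq Up_cube false⟩
    · exact ⟨_, free_gen Sp_sq Up_cube true⟩

/-- The universal property of the modular group. -/
theorem exists_hom {H : Type*} [Group H] {s u : H} (hs : s * s = 1) (hu : u * u * u = 1) :
    ∃ f : PSL2Z →* H, f Sp = s ∧ f Up = u := by
  let E := MulEquiv.ofBijective (free Sp_sq Up_cube) free_bij
  refine ⟨(free hs hu).comp E.symm.toMonoidHom, ?_, ?_⟩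
  · have : E.symm Sp = Monoid.CoprodI.of (i := false) (Multiplicative.ofAdd 1) := by
      rw [MulEquiv.symm_apply_eq]; exact (free_gen Sp_sq Up_cube false).symm
    show free hs hu (E.symm Sp) = s
    rw [this, free_gen]; rfl
  · have : E.symm Up = Monoid.CoprodI.of (i := true) (Multiplicative.ofAdd 1) := by
      rw [MulEquiv.symm_apply_eq]; exact (free_gen Sp_sq Up_cube true).symm
    show free hs hu (E.symm Up) = u
    rw [this, free_gen]; rfl

end K24


namespace K24

/-- Number of cycles (orbits) of a permutation. -/
noncomputable def cyc {α : Type*} (p : Equiv.Perm α) : ℕ :=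
  Nat.card (Quotient (Equiv.Perm.SameCycle.setoid p))

lemma sameCycle_conj {α β : Type*} {p : Equiv.Perm α} {q : Equiv.Perm β} (e : α ≃ β)
    (h : ∀ x, e (p x) = q (e x)) (x y : α) : p.SameCycle x y ↔ q.SameCycle (e x) (e y) := by
  have hq : q = e.permCongr p := by
    ext y
    simp [Equiv.permCongr_apply, h]
  have hz : ∀ (n : ℤ) (x : α), e ((p ^ n) x) = (q ^ n) (e x) := by
    intro n x
    have h1 : q ^ n = e.permCongr (p ^ n) := by
      rw [hq]
      exact (map_zpow e.permCongrHom p n).symm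
    rw [h1]; simp [Equiv.permCongr_apply]
  constructor
  · rintro ⟨n, hn⟩
    exact ⟨n, by rw [← hz, hn]⟩
  · rintro ⟨n, hn⟩
    refine ⟨n, e.injective ?_⟩
    rw [hz, hn]

lemma cyc_conj {α β : Type*} {p : Equiv.Perm α} {q : Equiv.Perm β} (e : α ≃ β)
    (h : ∀ x, e (p x) = q (e x)) : cyc p = cyc q :=
  Nat.card_congr (Quotient.congr e fun x y => sameCycle_conj e h x y)

lemma nOrb_eq (g : PSL2Z) (Γ : Subgroup PSL2Z) :
    nOrb g Γ = cyc (MulAction.toPerm g : Equiv.Perm (PSL2Z ⧸ Γ)) := by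
  refine Nat.card_congr (Quotient.congr (Equiv.refl _) fun x y => ?_)
  have hz : ∀ n : ℤ, ∀ x : PSL2Z ⧸ Γ,
      ((MulAction.toPerm g : Equiv.Perm (PSL2Z ⧸ Γ)) ^ n) x = (g ^ n) • x := by
    intro n x
    have := map_zpow (MulAction.toPermHom PSL2Z (PSL2Z ⧸ Γ)) g n
    have h2 := congrArg (fun f => f x) this
    exact h2.symm
  show (x ∈ MulAction.orbit (Subgroup.zpowers g) y) ↔ Equiv.Perm.SameCycle _ x y
  constructor
  · rintro ⟨⟨_, n, rfl⟩, hn⟩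
    refine Equiv.Perm.SameCycle.symm ⟨n, ?_⟩
    rw [hz]; exact hn
  · intro h
    obtain ⟨n, hn⟩ := h.symm
    rw [hz] at hn
    exact ⟨⟨g ^ n, n, rfl⟩, hn⟩

lemma conj_equiv {G : Type*} [Group G] {A B : Subgroup G} (h : SubgroupConj A B) :
    ∃ e : G ⧸ A ≃ G ⧸ B, ∀ (g : G) (x : G ⧸ A), e (g • x) = g • e x := by
  obtain ⟨c, rfl⟩ := h
  refine ⟨Quotient.congr (Equiv.mulRight c⁻¹) ?_, ?_⟩
  · intro x y
    show (QuotientGroup.leftRel A) x y ↔ (QuotientGroup.leftRel _) (x * c⁻¹) (y * c⁻¹)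
    rw [QuotientGroup.leftRel_apply, QuotientGroup.leftRel_apply, Subgroup.mem_map]
    constructor
    · intro h
      exact ⟨_, h, by simp [mul_assoc]⟩
    · rintro ⟨z, hz, hzz⟩
      have : x⁻¹ * y = z := by
        simp only [MulEquiv.toMonoidHom_eq_coe, MonoidHom.coe_coe, MulAut.conj_apply] at hzz
        have h2 : z = c⁻¹ * (c * z * c⁻¹) * c := by group
        rw [h2, hzz]; group
      rw [this]; exact hz
  · intro g x
    induction x using QuotientGroup.induction_on with
    | H x =>
      exact congrArg (QuotientGroup.mk (s := Subgroup.map (MulAut.conj c).toMonoidHom A))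
        (mul_assoc g x c⁻¹)

lemma conj_stab {G : Type*} [Group G] {A : Subgroup G} (x : G ⧸ A) :
    SubgroupConj A (MulAction.stabilizer G x) := by
  induction x using QuotientGroup.induction_on with
  | H x =>
    refine ⟨x, ?_⟩
    ext g
    rw [Subgroup.mem_map, MulAction.mem_stabilizer_iff]
    have : g • (x : G ⧸ A) = x ↔ x⁻¹ * g * x ∈ A := by
      show ((g * x : G) : G ⧸ A) = x ↔ _
      rw [eq_comm, QuotientGroup.eq, mul_assoc]
    rw [this]
    constructor
    · rintro ⟨z, hz, rfl⟩
      simpa [mul_assoc] using hz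
    · intro h
      exact ⟨_, h, by simp [mul_assoc]⟩

lemma stab_one {G : Type*} [Group G] (A : Subgroup G) :
    MulAction.stabilizer G ((1 : G) : G ⧸ A) = A := by
  ext g
  rw [MulAction.mem_stabilizer_iff]
  show ((g * 1 : G) : G ⧸ A) = ((1 : G) : G ⧸ A) ↔ _
  rw [eq_comm, QuotientGroup.eq]; simp

lemma nFix_conj {A B : Subgroup PSL2Z} (h : SubgroupConj A B) (g : PSL2Z) :
    nFix g A = nFix g B := by
  obtain ⟨e, he⟩ := conj_equiv h
  refine Nat.card_congr (e.subtypeEquiv fun x => ?_)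
  rw [← he, e.apply_eq_iff_eq]

lemma nOrb_conj {A B : Subgroup PSL2Z} (h : SubgroupConj A B) (g : PSL2Z) :
    nOrb g A = nOrb g B := by
  obtain ⟨e, he⟩ := conj_equiv h
  rw [nOrb_eq, nOrb_eq]
  exact cyc_conj e fun x => he g x

lemma index_conj {A B : Subgroup PSL2Z} (h : SubgroupConj A B) : A.index = B.index := by
  obtain ⟨e, he⟩ := conj_equiv h
  exact Nat.card_congr e

/-- The property we count. -/
def PP (Γ : Subgroup PSL2Z) : Prop := Γ.index ≠ 0 ∧ GenusZero Γ ∧ tfIdx Γ = 24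

lemma PP_conj {A B : Subgroup PSL2Z} (h : SubgroupConj A B) : PP A ↔ PP B := by
  unfold PP GenusZero tfIdx
  simp only [nFix_conj h, nOrb_conj h, index_conj h]

lemma conj_refl {G : Type*} [Group G] (A : Subgroup G) : SubgroupConj A A :=
  ⟨1, by rw [map_one]; exact Subgroup.map_id A⟩

lemma conj_iff {G : Type*} [Group G] {A B : Subgroup G} :
    SubgroupConj A B ↔ ∃ x : G ⧸ A, MulAction.stabilizer G x = B := by
  constructor
  · rintro h
    obtain ⟨e, he⟩ := conj_equiv h
    refine ⟨e.symm ((1 : G) : G ⧸ B), ?_⟩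
    refine Eq.trans ?_ (stab_one B)
    ext g
    rw [MulAction.mem_stabilizer_iff, MulAction.mem_stabilizer_iff, ← e.apply_eq_iff_eq, he,
      e.apply_symm_apply]
  · rintro ⟨x, rfl⟩
    exact conj_stab x

lemma conj_symm {G : Type*} [Group G] {A B : Subgroup G} (h : SubgroupConj A B) :
    SubgroupConj B A := by
  obtain ⟨e, he⟩ := conj_equiv h
  rw [conj_iff]
  refine ⟨e ((1 : G) : G ⧸ A), ?_⟩
  conv_rhs => rw [← stab_one A]
  ext g
  rw [MulAction.mem_stabilizer_iff, MulAction.mem_stabilizer_iff, ← he, e.apply_eq_iff_eq]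

lemma conj_trans {G : Type*} [Group G] {A B C : Subgroup G} (h : SubgroupConj A B)
    (h' : SubgroupConj B C) : SubgroupConj A C := by
  obtain ⟨g, rfl⟩ := h
  obtain ⟨g', rfl⟩ := h'
  refine ⟨g' * g, ?_⟩
  rw [Subgroup.map_map]
  congr 1
  ext x
  simp

/-- Number of cosets with stabilizer `Γ`. -/
noncomputable def aN (Γ : Subgroup PSL2Z) : ℕ :=
  Nat.card {x : PSL2Z ⧸ Γ // MulAction.stabilizer PSL2Z x = Γ}

/-- Words describing the root types. -/
noncomputable def wd (k : ℕ) : PSL2Z := if k = 0 then Sp else if k = 1 then Up else if k = 2 then Tp else 1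

/-- `lcm (1, ..., 24)`. -/
def KK : ℕ := 5354228880

/-- Condition for a subgroup to be counted with root type `k`. -/
def CC (k : ℕ) (Γ : Subgroup PSL2Z) : Prop :=
  PP Γ ∧ (∀ j < k, nFix (wd j) Γ = 0) ∧ wd k ∈ Γ

open Classical in
/-- Weight of a subgroup. -/
noncomputable def WW (k : ℕ) (Γ : Subgroup PSL2Z) : ℕ :=
  if CC k Γ then KK / nFix (wd k) Γ * aN Γ else 0

open Classical in
lemma class_sum {A : Subgroup PSL2Z} (hA : A.index ≠ 0) (w : PSL2Z) :
    ∑' Γ : Subgroup PSL2Z, (if SubgroupConj A Γ ∧ w ∈ Γ then (aN Γ : ENNReal) else 0) =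
      nFix w A := by
  have : Finite (PSL2Z ⧸ A) := Nat.finite_of_card_ne_zero hA
  have h1 : ∀ Γ : Subgroup PSL2Z, (if SubgroupConj A Γ ∧ w ∈ Γ then (aN Γ : ENNReal) else 0) =
      ∑' x : PSL2Z ⧸ A, if MulAction.stabilizer PSL2Z x = Γ ∧ w ∈ Γ then (1 : ENNReal) else 0 := by
    intro Γ
    by_cases hw : w ∈ Γ
    · by_cases hc : SubgroupConj A Γ
      · rw [if_pos ⟨hc, hw⟩]
        obtain ⟨e, he⟩ := conj_equiv hc
        have h2 : aN Γ = Nat.card {x : PSL2Z ⧸ A // MulAction.stabilizer PSL2Z x = Γ} := by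
          refine (Nat.card_congr (e.subtypeEquiv fun x => ?_)).symm
          have : MulAction.stabilizer PSL2Z x = MulAction.stabilizer PSL2Z (e x) := by
            ext g
            rw [MulAction.mem_stabilizer_iff, MulAction.mem_stabilizer_iff, ← he,
              e.apply_eq_iff_eq]
          rw [this]
        rw [h2]
        have : Fintype (PSL2Z ⧸ A) := Fintype.ofFinite _
        rw [tsum_fintype, Nat.card_eq_fintype_card, Fintype.card_subtype]
        simp [hw]
      · rw [if_neg (fun h => hc h.1)]
        symm
        rw [ENNReal.tsum_eq_zero]
        intro x
        rw [if_neg]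
        rintro ⟨h, -⟩
        exact hc (h ▸ conj_stab x)
    · simp [hw]
  simp_rw [h1]
  rw [ENNReal.tsum_comm]
  have h3 : ∀ x : PSL2Z ⧸ A, (∑' Γ : Subgroup PSL2Z,
      if MulAction.stabilizer PSL2Z x = Γ ∧ w ∈ Γ then (1 : ENNReal) else 0) =
      if w • x = x then 1 else 0 := by
    intro x
    rw [tsum_eq_single (MulAction.stabilizer PSL2Z x)]
    · simp [MulAction.mem_stabilizer_iff]
    · intro Γ h
      rw [if_neg]
      rintro ⟨h', -⟩
      exact h h'.symm
  simp_rw [h3]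
  have : Fintype (PSL2Z ⧸ A) := Fintype.ofFinite _
  unfold nFix
  rw [tsum_fintype, Nat.card_eq_fintype_card, Fintype.card_subtype]
  simp

lemma dvd_KK {n : ℕ} (h1 : n ≠ 0) (h : n ≤ 24) : n ∣ KK := by
  interval_cases n
  · exact absurd rfl h1
  all_goals decide

lemma nFix_le {A : Subgroup PSL2Z} (hA : A.index ≠ 0) (w : PSL2Z) : nFix w A ≤ A.index := by
  have : Finite (PSL2Z ⧸ A) := Nat.finite_of_card_ne_zero hA
  exact Finite.card_subtype_le _

lemma class_total {A : Subgroup PSL2Z} (hA : PP A) :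
    ∑' B : {Γ : Subgroup PSL2Z // SubgroupConj A Γ},
      ∑ k ∈ Finset.range 4, (WW k B.1 : ENNReal) = KK := by
  classical
  have hex : ∃ k, nFix (wd k) A ≠ 0 := by
    refine ⟨3, ?_⟩
    have : Finite (PSL2Z ⧸ A) := Nat.finite_of_card_ne_zero hA.1
    have : nFix (wd 3) A = A.index := by
      unfold nFix wd
      simp [Subgroup.index]
    rw [this]; exact hA.1
  have h3 : nFix (wd 3) A ≠ 0 := by
    have : nFix (wd 3) A = A.index := by
      unfold nFix wd
      simp [Subgroup.index]
    rw [this]; exact hA.1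
  set k0 := Nat.find hex with hk0
  have hk3 : k0 ≤ 3 := Nat.find_le h3
  have hs := Nat.find_spec hex
  rw [← hk0] at hs
  have hm : ∀ j < k0, nFix (wd j) A = 0 := fun j hj => by
    have := Nat.find_min hex hj
    push Not at this
    exact this
  have hW : ∀ B : {Γ : Subgroup PSL2Z // SubgroupConj A Γ},
      ∑ k ∈ Finset.range 4, (WW k B.1 : ENNReal) =
      (KK / nFix (wd k0) A : ℕ) * (if wd k0 ∈ B.1 then (aN B.1 : ENNReal) else 0) := by
    rintro ⟨B, hB⟩
    rw [Finset.sum_eq_single k0]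
    · unfold WW CC
      by_cases hw : wd k0 ∈ B
      · rw [if_pos hw, if_pos ⟨(PP_conj hB).1 hA, fun j hj => (nFix_conj hB _).symm.trans (hm j hj), hw⟩,
          nFix_conj hB]
        push_cast; rfl
      · rw [if_neg hw, if_neg (fun h => hw h.2.2)]; simp
    · intro k hk hkk
      unfold WW
      rw [if_neg]
      · simp
      · rintro ⟨h1, h2, h3⟩
        rcases lt_or_gt_of_ne hkk with hlt | hgt
        · have h4 := hm k hlt
          rw [nFix_conj hB] at h4
          have : Finite (PSL2Z ⧸ B) := Nat.finite_of_card_ne_zero h1.1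
          unfold nFix at h4
          rw [Finite.card_eq_zero_iff] at h4
          refine h4.elim ⟨((1 : PSL2Z) : PSL2Z ⧸ B), ?_⟩
          rw [← MulAction.mem_stabilizer_iff, stab_one]
          exact h3
        · exact hs ((nFix_conj hB _).trans (h2 _ hgt))
    · intro h
      exact absurd (Finset.mem_range.2 (by omega)) h
  simp_rw [hW]
  rw [ENNReal.tsum_mul_left]
  have h5 := class_sum hA.1 (wd k0)
  have h6 : ∑' B : {Γ : Subgroup PSL2Z // SubgroupConj A Γ},
      (if wd k0 ∈ B.1 then (aN B.1 : ENNReal) else 0) = nFix (wd k0) A := by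
    rw [← h5, ← tsum_subtype_eq_of_support_subset (s := {Γ : Subgroup PSL2Z | SubgroupConj A Γ})]
    · refine tsum_congr ?_
      rintro ⟨B, hB⟩
      have : SubgroupConj A B := hB
      simp [this]
    · intro Γ hΓ
      by_contra h
      exact hΓ (if_neg fun h' => h h'.1)
  rw [h6]
  have hle : nFix (wd k0) A ≤ 24 := by
    have h7 := nFix_le hA.1 (wd k0)
    have h8 := hA.2.2
    unfold tfIdx at h8
    omega
  rw [← Nat.cast_mul, Nat.div_mul_cancel (dvd_KK hs hle)]

/-- The counting formula. -/
theorem count_formula {N : ℕ} (h : ∑ k ∈ Finset.range 4, ∑' Γ : Subgroup PSL2Z, (WW k Γ : ENNReal) =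
    (N * KK : ℕ)) : countClasses PP = N := by
  classical
  rw [← Summable.tsum_finsetSum (fun _ _ => ENNReal.summable)] at h
  let R : {Γ : Subgroup PSL2Z // PP Γ} → {Γ : Subgroup PSL2Z // PP Γ} → Prop :=
    fun A B => SubgroupConj A.1 B.1
  have hR : Equivalence R := ⟨fun A => conj_refl _, fun h => conj_symm h, fun h h' => conj_trans h h'⟩
  let f : {Γ : Subgroup PSL2Z // PP Γ} → ENNReal := fun B =>
    ∑ k ∈ Finset.range 4, (WW k B.1 : ENNReal)
  have h1 : ∑' B : {Γ : Subgroup PSL2Z // PP Γ}, f B = (N * KK : ℕ) := by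
    rw [← h]
    rw [← tsum_subtype_eq_of_support_subset (s := {Γ : Subgroup PSL2Z | PP Γ})]
    · rfl
    · intro Γ hΓ
      by_contra hh
      refine hΓ ?_
      refine Finset.sum_eq_zero fun k _ => ?_
      unfold WW
      rw [if_neg (fun h => hh h.1)]; simp
  have h2 : ∑' B, f B = ∑' q : Quot R, ∑' B : {B // Quot.mk R B = q}, f B.1 := by
    rw [← (Equiv.sigmaFiberEquiv (Quot.mk R)).tsum_eq]
    exact ENNReal.tsum_sigma (fun (q : Quot R) (B : {B // Quot.mk R B = q}) => f B.1)
  have h3 : ∀ q : Quot R, ∑' B : {B // Quot.mk R B = q}, f B.1 = KK := by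
    intro q
    induction q using Quot.ind with
    | mk A =>
      rw [← class_total A.2]
      let e : {B // Quot.mk R B = Quot.mk R A} ≃ {Γ : Subgroup PSL2Z // SubgroupConj A.1 Γ} :=
        { toFun := fun B => ⟨B.1.1, hR.symm ((Equivalence.quot_mk_eq_iff hR _ _).1 B.2)⟩
          invFun := fun Γ => ⟨⟨Γ.1, (PP_conj Γ.2).1 A.2⟩,
            (Equivalence.quot_mk_eq_iff hR _ _).2 (hR.symm Γ.2)⟩
          left_inv := fun B => rfl
          right_inv := fun B => rfl }
      rw [← e.tsum_eq]
      rfl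
  simp_rw [h2, h3, ENNReal.tsum_const] at h1
  have hK : (KK : ENNReal) ≠ 0 := by simp [KK]
  rw [Nat.cast_mul] at h1
  have h4 := (ENNReal.mul_left_inj hK (ENNReal.natCast_ne_top _)).1 h1
  have h5 : ENat.card (Quot R) = N := by exact_mod_cast h4
  show Nat.card (Quot R) = N
  unfold Nat.card
  unfold ENat.card at h5
  rw [← Cardinal.toNat_toENat, h5]; simp

end K24


namespace K24

open Equiv Equiv.Perm

lemma sameCycle_le {α : Type*} {p : Perm α} {r : α → α → Prop} (hr : Equivalence r)
    (h : ∀ x, r x (p x)) {x y : α} (hxy : p.SameCycle x y) : r x y := by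
  obtain ⟨n, rfl⟩ := hxy
  induction n using Int.induction_on with
  | zero => exact hr.refl _
  | succ n ih =>
    rw [add_comm, _root_.zpow_add, zpow_one, Perm.mul_apply]
    exact hr.trans ih (h _)
  | pred n ih =>
    refine hr.trans ih ?_
    have := h ((p ^ (-(n : ℤ) - 1)) x)
    rw [← Perm.mul_apply, ← _root_.zpow_one_add] at this
    have h2 : 1 + (-(n : ℤ) - 1) = -n := by ring
    rw [h2] at this
    exact hr.symm this

lemma same_swap_of_not {α : Type*} [Finite α] [DecidableEq α] {p : Perm α} {a b : α}
    (hab : ¬ p.SameCycle a b) : (swap a b * p).SameCycle a b := by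
  classical
  have hex : ∃ n, 0 < n ∧ (p ^ n) b = b :=
    ⟨orderOf p, orderOf_pos p, by rw [pow_orderOf_eq_one]; rfl⟩
  obtain ⟨hpos, hfix⟩ := Nat.find_spec hex
  set n := Nat.find hex
  have hmin : ∀ m < n, 0 < m → (p ^ m) b ≠ b := fun m hm h0 h =>
    Nat.find_min hex hm ⟨h0, h⟩
  have key : ∀ i < n, ((swap a b * p) ^ i) b = (p ^ i) b := by
    intro i
    induction i with
    | zero => intro _; rfl
    | succ i ih =>
      intro hi
      rw [pow_succ', Perm.mul_apply, ih (by omega), Perm.mul_apply, ← Perm.mul_apply p, ← pow_succ']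
      refine swap_apply_of_ne_of_ne ?_ (hmin _ hi (by omega))
      intro h
      exact hab (SameCycle.symm ⟨((i + 1 : ℕ) : ℤ), by rw [zpow_natCast]; exact h⟩)
  refine SameCycle.symm ⟨(n : ℤ), ?_⟩
  rw [zpow_natCast]
  obtain ⟨i, hi⟩ : ∃ i, n = i + 1 := ⟨n - 1, by omega⟩
  rw [hi, pow_succ', Perm.mul_apply, key i (by omega), Perm.mul_apply, ← Perm.mul_apply p,
    ← pow_succ', ← hi, hfix, swap_apply_right]

lemma not_same_swap {α : Type*} [Finite α] [DecidableEq α] {p : Perm α} {a b : α} (hne : a ≠ b)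
    (hab : p.SameCycle a b) : ¬ (swap a b * p).SameCycle a b := by
  classical
  have hex : ∃ n, (p ^ n) a = b := by
    obtain ⟨n, -, hn⟩ := hab.exists_pow_eq'
    exact ⟨n, hn⟩
  have hfix := Nat.find_spec hex
  set n := Nat.find hex
  have hmin : ∀ m < n, (p ^ m) a ≠ b := fun m hm h => Nat.find_min hex hm h
  have hpos : 0 < n := by
    rcases Nat.eq_zero_or_pos n with h | h
    · rw [h] at hfix; exact absurd hfix hne
    · exact h
  have hnota : ∀ m < n, 0 < m → (p ^ m) a ≠ a := by
    intro m hm h0 h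
    refine hmin (n - m) (by omega) ?_
    rw [← hfix]
    have h2 : n = (n - m) + m := by omega
    conv_rhs => rw [h2, pow_add, Perm.mul_apply, h]
  have key : ∀ i < n, ((swap a b * p) ^ i) a = (p ^ i) a := by
    intro i
    induction i with
    | zero => intro _; rfl
    | succ i ih =>
      intro hi
      rw [pow_succ', Perm.mul_apply, ih (by omega), Perm.mul_apply, ← Perm.mul_apply p, ← pow_succ']
      exact swap_apply_of_ne_of_ne (hnota _ hi (by omega)) (hmin _ hi)
  have hper : ((swap a b * p) ^ n) a = a := by
    obtain ⟨i, hi⟩ : ∃ i, n = i + 1 := ⟨n - 1, by omega⟩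
    rw [hi, pow_succ', Perm.mul_apply, key i (by omega), Perm.mul_apply, ← Perm.mul_apply p,
      ← pow_succ', ← hi, hfix, swap_apply_right]
  intro h
  obtain ⟨j, -, hj⟩ := h.exists_pow_eq'
  have h2 : ((swap a b * p) ^ j) a = ((swap a b * p) ^ (j % n)) a := by
    conv_lhs => rw [← Nat.mod_add_div j n, pow_add, pow_mul, Perm.mul_apply]
    congr 1
    exact Perm.pow_apply_eq_self_of_apply_eq_self hper _
  rw [h2, key _ (Nat.mod_lt _ hpos)] at hj
  exact hmin _ (Nat.mod_lt _ hpos) hj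

lemma cyc_swap_not {α : Type*} [Finite α] [DecidableEq α] {p : Perm α} {a b : α}
    (hab : ¬ p.SameCycle a b) : cyc p = cyc (swap a b * p) + 1 := by
  classical
  have hs := same_swap_of_not hab
  set p' := swap a b * p with hp'
  have hpp : ∀ x, p'.SameCycle x (p x) := by
    intro x
    have h1 : p'.SameCycle x (p' x) := (sameCycle_apply_right.2 (SameCycle.refl _ _))
    have h2 : p' x = swap a b (p x) := rfl
    by_cases ha : p x = a
    · rw [ha, swap_apply_left] at h2
      rw [h2] at h1
      rw [ha]; exact h1.trans hs.symm
    · by_cases hb : p x = b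
      · rw [hb, swap_apply_right] at h2
        rw [h2] at h1
        rw [hb]; exact h1.trans hs
      · rw [swap_apply_of_ne_of_ne ha hb] at h2
        rw [← h2]; exact h1
  have hle : ∀ {x y}, p.SameCycle x y → p'.SameCycle x y := fun h =>
    sameCycle_le ⟨fun x => SameCycle.refl _ _, fun h => h.symm, fun h h' => h.trans h'⟩ hpp h
  let J : α → α → Prop := fun x y => p.SameCycle x y ∨
    ((p.SameCycle x a ∨ p.SameCycle x b) ∧ (p.SameCycle y a ∨ p.SameCycle y b))
  have hJ : Equivalence J := by
    refine ⟨fun x => Or.inl (SameCycle.refl _ _), ?_, ?_⟩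
    · rintro x y (h | ⟨h, h'⟩)
      · exact Or.inl h.symm
      · exact Or.inr ⟨h', h⟩
    · rintro x y z (h | ⟨h, h'⟩) (k | ⟨k, k'⟩)
      · exact Or.inl (h.trans k)
      · exact Or.inr ⟨k.imp h.trans h.trans, k'⟩
      · exact Or.inr ⟨h, h'.imp k.symm.trans k.symm.trans⟩
      · exact Or.inr ⟨h, k'⟩
  have hJle : ∀ {x y}, p'.SameCycle x y → J x y := by
    intro x y h
    refine sameCycle_le hJ (fun x => ?_) h
    have h2 : p' x = swap a b (p x) := rfl
    have h1 : p.SameCycle x (p x) := (sameCycle_apply_right.2 (SameCycle.refl _ _))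
    by_cases ha : p x = a
    · rw [ha, swap_apply_left] at h2
      rw [ha] at h1; rw [h2]
      exact Or.inr ⟨Or.inl h1, Or.inr (SameCycle.refl _ _)⟩
    · by_cases hb : p x = b
      · rw [hb, swap_apply_right] at h2
        rw [hb] at h1; rw [h2]
        exact Or.inr ⟨Or.inr h1, Or.inl (SameCycle.refl _ _)⟩
      · rw [swap_apply_of_ne_of_ne ha hb] at h2
        rw [h2]; exact Or.inl h1
  let B : Quotient (SameCycle.setoid p) := Quotient.mk _ b
  let f : {q : Quotient (SameCycle.setoid p) // q ≠ B} → Quotient (SameCycle.setoid p') :=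
    fun q => Quotient.map' (s₁ := SameCycle.setoid p) (s₂ := SameCycle.setoid p')
      id (fun x y h => hle h) q.1
  have hf : Function.Bijective f := by
    constructor
    · rintro ⟨q, hq⟩ ⟨q', hq'⟩ h
      induction q using Quotient.inductionOn with | h x => ?_
      induction q' using Quotient.inductionOn with | h y => ?_
      have h1 : p'.SameCycle x y := Quotient.exact h
      have hx : ¬ p.SameCycle x b := fun h => hq (Quotient.sound h)
      have hy : ¬ p.SameCycle y b := fun h => hq' (Quotient.sound h)
      apply Subtype.ext
      refine Quotient.sound ?_
      rcases hJle h1 with h2 | ⟨h2, h3⟩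
      · exact h2
      · exact (h2.resolve_right hx).trans (h3.resolve_right hy).symm
    · intro q
      induction q using Quotient.inductionOn with | h x => ?_
      by_cases hx : p.SameCycle x b
      · refine ⟨⟨Quotient.mk _ a, fun h => hab (Quotient.exact h)⟩, ?_⟩
        exact Quotient.sound (hs.trans (hle hx.symm))
      · exact ⟨⟨Quotient.mk _ x, fun h => hx (Quotient.exact h)⟩, rfl⟩
  have h1 := Nat.card_congr (Equiv.ofBijective f hf)
  unfold cyc
  rw [← h1]
  have : Fintype (Quotient (SameCycle.setoid p)) := Fintype.ofFinite _
  rw [Nat.card_eq_fintype_card, Nat.card_eq_fintype_card, Fintype.card_subtype_compl,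
    Fintype.card_subtype_eq]
  have : 0 < Fintype.card (Quotient (SameCycle.setoid p)) := Fintype.card_pos_iff.2 ⟨B⟩
  omega

lemma cyc_swap_same {α : Type*} [Finite α] [DecidableEq α] {p : Perm α} {a b : α} (hne : a ≠ b)
    (hab : p.SameCycle a b) : cyc (swap a b * p) = cyc p + 1 := by
  have := cyc_swap_not (not_same_swap hne hab)
  rwa [← mul_assoc, Equiv.swap_mul_self, one_mul] at this

lemma same_fixed {α : Type*} {p : Perm α} {a b : α} (hb : p b = b) (h : p.SameCycle a b) :
    a = b := by
  obtain ⟨n, hn⟩ := h.symm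
  rw [← hn]; exact (zpow_apply_eq_self_of_apply_eq_self hb n)

lemma cyc_swap_fixed {α : Type*} [Finite α] [DecidableEq α] {p : Perm α} {a b : α} (hne : a ≠ b)
    (hb : p b = b) : cyc p = cyc (swap a b * p) + 1 :=
  cyc_swap_not fun h => hne (same_fixed hb h)

lemma cyc_one {α : Type*} : cyc (1 : Perm α) = Nat.card α := by
  refine (Nat.card_congr (Equiv.ofBijective (fun a => Quotient.mk (SameCycle.setoid (1 : Perm α)) a) ⟨?_, ?_⟩)).symm
  · intro x y h
    have : SameCycle 1 x y := Quotient.exact h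
    simpa using this
  · exact Quotient.mk_surjective

/-- Cycles of a permutation fixing everything outside a set. -/
lemma cyc_sub {α : Type*} [Finite α] {X : Type*} (p : Perm α) (q : Perm X) (Q : α → Prop)
    (e : {a // Q a} ≃ X) (hQ : ∀ a, ¬ Q a → p a = a) (hp : ∀ a, Q a → Q (p a))
    (he : ∀ a : {a // Q a}, e ⟨p a.1, hp _ a.2⟩ = q (e a)) :
    cyc p = cyc q + Nat.card {a // ¬ Q a} := by
  classical
  have hQQ : ∀ {x y}, p.SameCycle x y → Q x → Q y := by
    intro x y h hx
    obtain ⟨n, -, rfl⟩ := h.exists_pow_eq'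
    induction n with
    | zero => exact hx
    | succ n ih =>
      rw [pow_succ', Perm.mul_apply]
      exact hp _ (ih (⟨(n : ℤ), by rw [zpow_natCast]⟩))
  let p0 : Perm {a // Q a} := p.subtypePerm (fun a => ⟨fun h => by
    by_contra hh
    rw [hQ a hh] at h
    exact hh h, hp a⟩)
  have h0 : cyc p0 = cyc q := cyc_conj e fun x => he x
  rw [← h0]
  unfold cyc
  have : Finite (Quotient (SameCycle.setoid p0)) := Quotient.finite _
  rw [← Nat.card_sum]
  refine (Nat.card_congr (Equiv.ofBijective (Sum.elim (fun c => Quotient.map' (s₁ := SameCycle.setoid p0) (s₂ := SameCycle.setoid p)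
    (fun a => a.1) (fun x y h => ?_) c) (fun a => Quotient.mk (SameCycle.setoid p) a.1)) ⟨?_, ?_⟩)).symm
  · exact sameCycle_subtypePerm.1 h
  · rintro (c | c) (c' | c') h
    · induction c using Quotient.inductionOn with | h x => ?_
      induction c' using Quotient.inductionOn with | h y => ?_
      have h1 : p.SameCycle x.1 y.1 := Quotient.exact h
      congr 1
      exact Quotient.sound (s := SameCycle.setoid p0) (sameCycle_subtypePerm.2 h1)
    · induction c using Quotient.inductionOn with | h x => ?_
      have h1 : p.SameCycle x.1 c'.1 := Quotient.exact h
      exact absurd (hQQ h1 x.2) c'.2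
    · induction c' using Quotient.inductionOn with | h x => ?_
      have h1 : p.SameCycle c.1 x.1 := Quotient.exact h
      exact absurd (hQQ h1.symm x.2) c.2
    · have h1 : p.SameCycle c.1 c'.1 := Quotient.exact h
      congr 1
      exact Subtype.ext (same_fixed (hQ _ c'.2) h1)
  · intro c
    induction c using Quotient.inductionOn with | h x => ?_
    by_cases hx : Q x
    · exact ⟨Sum.inl (Quotient.mk _ ⟨x, hx⟩), rfl⟩
    · exact ⟨Sum.inr ⟨x, hx⟩, rfl⟩

end K24


namespace K24

open Equiv Equiv.Perm

/-- The coset of `x`. -/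
abbrev cs (Γ : Subgroup PSL2Z) (x : PSL2Z) : PSL2Z ⧸ Γ := QuotientGroup.mk x

lemma smul_cs (Γ : Subgroup PSL2Z) (x y : PSL2Z) : x • cs Γ y = cs Γ (x * y) := rfl

/-- Invariants of a state of the search: darts `i < d` have been processed, there are `m` darts,
the total weight is `w`, the involution is defined on `D`. -/
structure Inv (d m w : ℕ) (D : Finset (Fin 32)) (s u : Perm (Fin 32)) (g : Fin 32 → PSL2Z) :
    Prop where
  m_pos : 0 < m
  m_le : m ≤ w
  w_le : w ≤ 27
  d_le : d ≤ m
  D_lt : ∀ i ∈ D, i.val < m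
  s_nD : ∀ i, i ∉ D → s i = i
  D_d : ∀ i : Fin 32, i.val < d → i ∈ D
  s_sq : ∀ i, s (s i) = i
  u_cu : ∀ i, u (u (u i)) = i
  u_ge : ∀ i : Fin 32, m ≤ i.val → u i = i
  u_le : ∀ i : Fin 32, (u i).val ≤ i.val + 1
  tree : ∀ i : Fin 32, 0 < i.val → i.val < m →
    (i ∈ D ∧ (s i).val < i.val) ∨ (∃ j : Fin 32, j.val + 1 = i.val ∧ u j = i)
  wt : m + 3 * (D.filter fun i => s i = i).card +
    2 * (Finset.univ.filter fun i : Fin 32 => i.val < m ∧ u i = i).card = w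
  g0 : g 0 = 1
  hom : ∀ f : PSL2Z →* Perm (Fin 32), (∀ i ∈ D, f Sp i = s i) →
    (∀ i : Fin 32, i.val < m → f Up i = u i) → ∀ i : Fin 32, i.val < m → f (g i) 0 = i

/-- Compatibility of a state with a subgroup. -/
structure Compat (m : ℕ) (D : Finset (Fin 32)) (s u : Perm (Fin 32)) (g : Fin 32 → PSL2Z)
    (Γ : Subgroup PSL2Z) : Prop where
  inj : ∀ i j : Fin 32, i.val < m → j.val < m → cs Γ (g i) = cs Γ (g j) → i = j
  U : ∀ i : Fin 32, i.val < m → Up • cs Γ (g i) = cs Γ (g (u i))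
  S : ∀ i ∈ D, Sp • cs Γ (g i) = cs Γ (g (s i))

lemma swap_s {s : Perm (Fin 32)} {a b : Fin 32} (ha : s a = a) (hb : s b = b) (i : Fin 32) :
    (swap a b * s) i = if i = a then b else if i = b then a else s i := by
  rw [Perm.mul_apply]
  split_ifs with h1 h2
  · rw [h1, ha, swap_apply_left]
  · rw [h2, hb, swap_apply_right]
  · refine swap_apply_of_ne_of_ne ?_ ?_
    · intro h; exact h1 (s.injective (h.trans ha.symm))
    · intro h; exact h2 (s.injective (h.trans hb.symm))

lemma swap_u {u : Perm (Fin 32)} {a b c : Fin 32} (hab : a ≠ b) (hac : a ≠ c) (hbc : b ≠ c)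
    (ha : u a = a) (hb : u b = b) (hc : u c = c)
    (i : Fin 32) : (swap a b * (swap b c * u)) i =
      if i = a then b else if i = b then c else if i = c then a else u i := by
  rw [Perm.mul_apply, swap_s hb hc]
  by_cases h1 : i = a
  · subst h1; simp [hab, hac, ha]
  · by_cases h2 : i = b
    · subst h2; rw [if_pos rfl, if_neg h1, if_pos rfl]
      exact swap_apply_of_ne_of_ne hac.symm hbc.symm
    · by_cases h3 : i = c
      · subst h3; simp [h1, h2]
      · simp only [h1, h2, h3, if_false]
        refine swap_apply_of_ne_of_ne ?_ ?_
        · intro h; exact h1 (u.injective (h.trans ha.symm))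
        · intro h; exact h2 (u.injective (h.trans hb.symm))

section
variable {d : Fin 32} {m w : ℕ} {D : Finset (Fin 32)} {s u : Perm (Fin 32)} {g : Fin 32 → PSL2Z}

lemma Inv.s_mem (h : Inv d m w D s u g) {i : Fin 32} (hi : i ∈ D) : s i ∈ D := by
  by_contra hh
  have h1 := h.s_nD _ hh
  rw [h.s_sq] at h1
  rw [← h1] at hh
  exact hh hi

lemma Inv.u_lt (h : Inv d m w D s u g) {i : Fin 32} (hi : i.val < m) : (u i).val < m := by
  by_contra hh
  have h1 := h.u_ge _ (not_lt.1 hh)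
  have := u.injective h1
  rw [this] at hh
  exact hh hi

lemma Inv.s_lt (h : Inv d m w D s u g) {i : Fin 32} (hi : i.val < m) : (s i).val < m := by
  by_cases hD : i ∈ D
  · exact h.D_lt _ (h.s_mem hD)
  · rwa [h.s_nD _ hD]

lemma Inv.skip (h : Inv d m w D s u g) (hd : d ∈ D) :
    Inv (d.val + 1) m w D s u g :=
  { h with
    d_le := h.D_lt _ hd
    D_d := fun i hi => by
      rcases Nat.lt_succ_iff_lt_or_eq.1 hi with h1 | h1
      · exact h.D_d i h1
      · rw [Fin.ext h1]; exact hd }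

lemma Inv.fix (h : Inv d m w D s u g) (hd : d ∉ D) (hdm : d.val < m) (hw : w ≤ 24) :
    Inv (d.val + 1) m (w + 3) (insert d D) s u g :=
  { h with
    m_le := by have := h.m_le; omega
    w_le := by omega
    d_le := hdm
    D_lt := fun i hi => by
      rcases Finset.mem_insert.1 hi with rfl | h1
      · exact hdm
      · exact h.D_lt i h1
    s_nD := fun i hi => h.s_nD i fun hh => hi (Finset.mem_insert_of_mem hh)
    D_d := fun i hi => by
      rcases Nat.lt_succ_iff_lt_or_eq.1 hi with h1 | h1
      · exact Finset.mem_insert_of_mem (h.D_d i h1)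
      · rw [Fin.ext h1]; exact Finset.mem_insert_self _ _
    tree := fun i h0 h1 => (h.tree i h0 h1).imp (fun h => ⟨Finset.mem_insert_of_mem h.1, h.2⟩) id
    wt := by
      have h1 := h.wt
      rw [Finset.filter_insert, if_pos (h.s_nD d hd), Finset.card_insert_of_notMem]
      · omega
      · simp [hd]
    hom := fun f h1 h2 => h.hom f (fun i hi => h1 i (Finset.mem_insert_of_mem hi)) h2 }

lemma swap_sq {a b : Fin 32} (ha : s a = a) (hb : s b = b) (h : ∀ i, s (s i) = i)
    (i : Fin 32) : (swap a b * s) ((swap a b * s) i) = i := by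
  rw [swap_s ha hb, swap_s ha hb]
  by_cases h1 : i = a
  · subst h1; by_cases h2 : b = i <;> simp [h2]
  · by_cases h2 : i = b
    · subst h2; simp [h1]
    · have h3 : s i ≠ a := fun hh => h1 (s.injective (hh.trans ha.symm))
      have h4 : s i ≠ b := fun hh => h2 (s.injective (hh.trans hb.symm))
      simp [h1, h2, h3, h4, h]

lemma swap_filter {a b : Fin 32} (hab : a ≠ b) (ha : s a = a) (hb : s b = b) (haD : a ∉ D)
    (hbD : b ∉ D) :
    (insert a (insert b D)).filter (fun i => (swap a b * s) i = i) = D.filter fun i => s i = i := by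
  ext i
  simp only [Finset.mem_filter, Finset.mem_insert, swap_s ha hb]
  by_cases h1 : i = a
  · subst h1; simp [haD, hab.symm]
  · by_cases h2 : i = b
    · subst h2; simp [h1, hbD, hab]
    · simp [h1, h2]

lemma Inv.close (h : Inv d m w D s u g) (hd : d ∉ D) {e : Fin 32} (he : e ∉ D) (hde : d.val < e.val)
    (hem : e.val < m) :
    Inv (d.val + 1) m w (insert d (insert e D)) (swap d e * s) u g :=
  { h with
    d_le := by omega
    D_lt := fun i hi => by
      rcases Finset.mem_insert.1 hi with rfl | h1
      · omega
      · rcases Finset.mem_insert.1 h1 with rfl | h1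
        · exact hem
        · exact h.D_lt i h1
    s_nD := fun i hi => by
      simp only [Finset.mem_insert, not_or] at hi
      rw [swap_s (h.s_nD _ hd) (h.s_nD _ he), if_neg hi.1, if_neg hi.2.1, h.s_nD _ hi.2.2]
    D_d := fun i hi => by
      rcases Nat.lt_succ_iff_lt_or_eq.1 hi with h1 | h1
      · exact Finset.mem_insert_of_mem (Finset.mem_insert_of_mem (h.D_d i h1))
      · rw [Fin.ext h1]; exact Finset.mem_insert_self _ _
    s_sq := swap_sq (h.s_nD _ hd) (h.s_nD _ he) h.s_sq
    tree := fun i h0 h1 => by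
      refine (h.tree i h0 h1).imp (fun hh => ⟨by simp [hh.1], ?_⟩) id
      have h3 : i ≠ d := fun h4 => hd (h4 ▸ hh.1)
      have h4 : i ≠ e := fun h4 => he (h4 ▸ hh.1)
      rw [swap_s (h.s_nD _ hd) (h.s_nD _ he), if_neg h3, if_neg h4]
      exact hh.2
    wt := by
      rw [swap_filter (by intro hh; rw [hh] at hde; omega) (h.s_nD _ hd) (h.s_nD _ he) hd he]
      exact h.wt
    hom := fun f h1 h2 => h.hom f (fun i hi => by
      rw [h1 i (by simp [hi]), swap_s (h.s_nD _ hd) (h.s_nD _ he), if_neg, if_neg]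
      · rintro rfl; exact he hi
      · rintro rfl; exact hd hi) h2 }

lemma Inv.leaf (h : Inv d m w D s u g) (hd : d ∉ D) (hdm : d.val < m) (hw : w ≤ 24) {n : Fin 32}
    (hn : n.val = m) :
    Inv (d.val + 1) (m + 1) (w + 3) (insert d (insert n D)) (swap d n * s) u
      (Function.update g n (Sp * g d)) := by
  have hnD : n ∉ D := fun hh => by have := h.D_lt _ hh; omega
  have hdn : d ≠ n := by rintro rfl; omega
  have hsd := h.s_nD _ hd
  have hsn := h.s_nD _ hnD
  have hun := h.u_ge n (by omega)
  exact
  { m_pos := by omega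
    m_le := by have := h.m_le; omega
    w_le := by omega
    d_le := by omega
    D_lt := fun i hi => by
      rcases Finset.mem_insert.1 hi with rfl | h1
      · omega
      · rcases Finset.mem_insert.1 h1 with rfl | h1
        · omega
        · have := h.D_lt i h1; omega
    s_nD := fun i hi => by
      simp only [Finset.mem_insert, not_or] at hi
      rw [swap_s hsd hsn, if_neg hi.1, if_neg hi.2.1, h.s_nD _ hi.2.2]
    D_d := fun i hi => by
      rcases Nat.lt_succ_iff_lt_or_eq.1 hi with h1 | h1
      · exact Finset.mem_insert_of_mem (Finset.mem_insert_of_mem (h.D_d i h1))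
      · rw [Fin.ext h1]; exact Finset.mem_insert_self _ _
    s_sq := swap_sq hsd hsn h.s_sq
    u_cu := h.u_cu
    u_ge := fun i hi => h.u_ge i (by omega)
    u_le := h.u_le
    tree := fun i h0 h1 => by
      rw [swap_s hsd hsn]
      by_cases hin : i = n
      · subst hin
        left
        refine ⟨by simp, ?_⟩
        rw [if_neg hdn.symm, if_pos rfl]; omega
      · have : i.val ≠ n.val := fun hh => hin (Fin.ext hh)
        refine (h.tree i h0 (by omega)).imp (fun hh => ⟨by simp [hh.1], ?_⟩) id
        have h3 : i ≠ d := fun h4 => hd (h4 ▸ hh.1)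
        rw [if_neg h3, if_neg hin]
        exact hh.2
    wt := by
      rw [swap_filter hdn hsd hsn hd hnD]
      have h1 : (Finset.univ.filter fun i : Fin 32 => i.val < m + 1 ∧ u i = i) =
          insert n (Finset.univ.filter fun i : Fin 32 => i.val < m ∧ u i = i) := by
        ext i
        simp only [Finset.mem_filter, Finset.mem_univ, true_and, Finset.mem_insert]
        by_cases hin : i = n
        · subst hin; simp [hun, hn]
        · have : i.val ≠ n.val := fun hh => hin (Fin.ext hh)
          have h2 : i.val < m + 1 ↔ i.val < m := by omega
          simp [hin, h2]
      rw [h1, Finset.card_insert_of_notMem (by simp [hn])]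
      have := h.wt
      omega
    g0 := by
      rw [Function.update_of_ne, h.g0]
      intro hh
      have := h.m_pos
      rw [← hn, ← hh] at this
      simp at this
    hom := fun f h1 h2 => by
      have h3 := h.hom f (fun i hi => by
        rw [h1 i (by simp [hi]), swap_s hsd hsn, if_neg, if_neg]
        · rintro rfl; exact hnD hi
        · rintro rfl; exact hd hi) (fun i hi => h2 i (by omega))
      intro i hi
      by_cases hin : i = n
      · subst hin
        rw [Function.update_self, map_mul, Perm.mul_apply, h3 d hdm, h1 d (by simp),
          swap_s hsd hsn, if_pos rfl]
      · have : i.val ≠ n.val := fun hh => hin (Fin.ext hh)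
        rw [Function.update_of_ne hin]
        exact h3 i (by omega) }

/-- The labels after adding a new vertex. -/
def gv (g : Fin 32 → PSL2Z) (d a b c : Fin 32) : Fin 32 → PSL2Z := fun i =>
  if i = a then Sp * g d else if i = b then Up * (Sp * g d) else
    if i = c then Up * (Up * (Sp * g d)) else g i

lemma Inv.vert (h : Inv d m w D s u g) (hd : d ∉ D) (hdm : d.val < m) (hw : w ≤ 24) {a b c : Fin 32}
    (ha : a.val = m) (hb : b.val = m + 1) (hc : c.val = m + 2) :
    Inv (d.val + 1) (m + 3) (w + 3) (insert d (insert a D)) (swap d a * s)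
      (swap a b * (swap b c * u)) (gv g d a b c) := by
  have haD : a ∉ D := fun hh => by have := h.D_lt _ hh; omega
  have hda : d ≠ a := by rintro rfl; omega
  have hsd := h.s_nD _ hd
  have hsa := h.s_nD _ haD
  have hua := h.u_ge a (by omega)
  have hub := h.u_ge b (by omega)
  have huc := h.u_ge c (by omega)
  have hab : a ≠ b := by rintro rfl; omega
  have hac : a ≠ c := by rintro rfl; omega
  have hbc : b ≠ c := by rintro rfl; omega
  have hu' := swap_u hab hac hbc hua hub huc
  have hnua : ∀ i, i ≠ a → u i ≠ a := fun i hi hh => hi (u.injective (hh.trans hua.symm))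
  have hnub : ∀ i, i ≠ b → u i ≠ b := fun i hi hh => hi (u.injective (hh.trans hub.symm))
  have hnuc : ∀ i, i ≠ c → u i ≠ c := fun i hi hh => hi (u.injective (hh.trans huc.symm))
  have hlt : ∀ i : Fin 32, i.val < m + 3 → i ≠ a → i ≠ b → i ≠ c → i.val < m := by
    intro i h1 h2 h3 h4
    have h2' : i.val ≠ a.val := fun hh => h2 (Fin.ext hh)
    have h3' : i.val ≠ b.val := fun hh => h3 (Fin.ext hh)
    have h4' : i.val ≠ c.val := fun hh => h4 (Fin.ext hh)
    omega
  have hlta : ∀ i : Fin 32, i.val < m → i ≠ a ∧ i ≠ b ∧ i ≠ c := by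
    intro i h1
    refine ⟨?_, ?_, ?_⟩ <;> (rintro rfl; omega)
  exact
  { m_pos := by omega
    m_le := by have := h.m_le; omega
    w_le := by omega
    d_le := by omega
    D_lt := fun i hi => by
      rcases Finset.mem_insert.1 hi with rfl | h1
      · omega
      · rcases Finset.mem_insert.1 h1 with rfl | h1
        · omega
        · have := h.D_lt i h1; omega
    s_nD := fun i hi => by
      simp only [Finset.mem_insert, not_or] at hi
      rw [swap_s hsd hsa, if_neg hi.1, if_neg hi.2.1, h.s_nD _ hi.2.2]
    D_d := fun i hi => by
      rcases Nat.lt_succ_iff_lt_or_eq.1 hi with h1 | h1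
      · exact Finset.mem_insert_of_mem (Finset.mem_insert_of_mem (h.D_d i h1))
      · rw [Fin.ext h1]; exact Finset.mem_insert_self _ _
    s_sq := swap_sq hsd hsa h.s_sq
    u_cu := fun i => by
      rw [hu', hu', hu']
      by_cases h1 : i = a
      · simp [h1, hab.symm, hac.symm, hbc.symm]
      · by_cases h2 : i = b
        · simp [h2, hab.symm, hac.symm, hbc.symm]
        · by_cases h3 : i = c
          · simp [h3, hab.symm, hac.symm, hbc.symm]
          · simp [h1, h2, h3, hnua, hnub, hnuc, h.u_cu]
    u_ge := fun i hi => by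
      rw [hu', if_neg, if_neg, if_neg]
      · exact h.u_ge i (by omega)
      · rintro rfl; omega
      · rintro rfl; omega
      · rintro rfl; omega
    u_le := fun i => by
      rw [hu']
      split_ifs with h1 h2 h3
      · rw [h1]; omega
      · rw [h2]; omega
      · rw [h3]; omega
      · exact h.u_le i
    tree := fun i h0 h1 => by
      rw [swap_s hsd hsa]
      by_cases hia : i = a
      · subst hia
        left
        refine ⟨by simp, ?_⟩
        rw [if_neg hda.symm, if_pos rfl]; omega
      · by_cases hib : i = b
        · subst hib
          right
          exact ⟨a, by omega, by rw [hu', if_pos rfl]⟩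
        · by_cases hic : i = c
          · subst hic
            right
            exact ⟨b, by omega, by rw [hu', if_neg hab.symm, if_pos rfl]⟩
          · have hlt := hlt i h1 hia hib hic
            refine (h.tree i h0 hlt).imp (fun hh => ⟨by simp [hh.1], ?_⟩) ?_
            · have h3 : i ≠ d := fun h4 => hd (h4 ▸ hh.1)
              rw [if_neg h3, if_neg hia]
              exact hh.2
            · rintro ⟨j, hj, hj'⟩
              obtain ⟨h4, h5, h6⟩ := hlta j (by omega)
              exact ⟨j, hj, by rw [hu', if_neg h4, if_neg h5, if_neg h6]; exact hj'⟩
    wt := by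
      rw [swap_filter hda hsd hsa hd haD]
      have h1 : (Finset.univ.filter fun i : Fin 32 => i.val < m + 3 ∧
            (swap a b * (swap b c * u)) i = i) =
          (Finset.univ.filter fun i : Fin 32 => i.val < m ∧ u i = i) := by
        ext i
        simp only [Finset.mem_filter, Finset.mem_univ, true_and, hu']
        by_cases h1 : i = a
        · simp [h1, hab.symm, ha]
        · by_cases h2 : i = b
          · simp [h2, hab.symm, hbc.symm, hb]
          · by_cases h3 : i = c
            · simp [h3, hac.symm, hbc.symm, hac, hc]
            · simp only [h1, h2, h3, if_false]
              constructor
              · rintro ⟨h4, h5⟩; exact ⟨hlt i h4 h1 h2 h3, h5⟩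
              · rintro ⟨h4, h5⟩; exact ⟨by omega, h5⟩
      rw [h1]
      have := h.wt
      omega
    g0 := by
      obtain ⟨h4, h5, h6⟩ := hlta 0 h.m_pos
      rw [gv, if_neg h4, if_neg h5, if_neg h6, h.g0]
    hom := fun f h1 h2 => by
      have h3 := h.hom f (fun i hi => by
        rw [h1 i (by simp [hi]), swap_s hsd hsa, if_neg, if_neg]
        · rintro rfl; exact haD hi
        · rintro rfl; exact hd hi) (fun i hi => by
        obtain ⟨h4, h5, h6⟩ := hlta i hi
        rw [h2 i (by omega), hu', if_neg h4, if_neg h5, if_neg h6])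
      have e1 : f (Sp * g d) 0 = a := by
        rw [map_mul, Perm.mul_apply, h3 d hdm, h1 d (by simp), swap_s hsd hsa, if_pos rfl]
      have e2 : f (Up * (Sp * g d)) 0 = b := by
        rw [map_mul, Perm.mul_apply, e1, h2 a (by omega), hu', if_pos rfl]
      have e3 : f (Up * (Up * (Sp * g d))) 0 = c := by
        rw [map_mul, Perm.mul_apply, e2, h2 b (by omega), hu', if_neg hab.symm, if_pos rfl]
      intro i hi
      unfold gv
      split_ifs with k1 k2 k3
      · rw [k1]; exact e1
      · rw [k2]; exact e2
      · rw [k3]; exact e3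
      · exact h3 i (hlt i hi k1 k2 k3) }

end

end K24


namespace K24

open Equiv Equiv.Perm

section
variable {d : Fin 32} {m w : ℕ} {D : Finset (Fin 32)} {s u : Perm (Fin 32)} {g : Fin 32 → PSL2Z}
  {Γ : Subgroup PSL2Z}

lemma Sp_Sp (x : PSL2Z ⧸ Γ) : Sp • Sp • x = x := by rw [← mul_smul, Sp_sq, one_smul]

lemma Up_Up (x : PSL2Z ⧸ Γ) : Up • Up • Up • x = x := by
  rw [← mul_smul Up Up x, ← mul_smul Up (Up * Up) x, ← mul_assoc Up Up Up, Up_cube, one_smul]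

lemma fix_iff : Compat m (insert d D) s u g Γ ↔ Compat m D s u g Γ ∧
    Sp • cs Γ (g d) = cs Γ (g (s d)) := by
  constructor
  · intro h
    exact ⟨⟨h.inj, h.U, fun i hi => h.S i (Finset.mem_insert_of_mem hi)⟩,
      h.S d (Finset.mem_insert_self _ _)⟩
  · rintro ⟨h, h1⟩
    refine ⟨h.inj, h.U, fun i hi => ?_⟩
    rcases Finset.mem_insert.1 hi with rfl | hi
    · exact h1
    · exact h.S i hi

lemma close_iff (h : Inv d m w D s u g) (hd : d ∉ D) {e : Fin 32} (he : e ∉ D) (hde : d ≠ e) :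
    Compat m (insert d (insert e D)) (swap d e * s) u g Γ ↔ Compat m D s u g Γ ∧
      Sp • cs Γ (g d) = cs Γ (g e) := by
  have hs := swap_s (h.s_nD _ hd) (h.s_nD _ he)
  constructor
  · intro hh
    refine ⟨⟨hh.inj, hh.U, fun i hi => ?_⟩, ?_⟩
    · have := hh.S i (by simp [hi])
      rw [hs, if_neg, if_neg] at this
      · exact this
      · rintro rfl; exact he hi
      · rintro rfl; exact hd hi
    · have := hh.S d (by simp)
      rwa [hs, if_pos rfl] at this
  · rintro ⟨hh, h1⟩
    refine ⟨hh.inj, hh.U, fun i hi => ?_⟩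
    rw [hs]
    split_ifs with h2 h3
    · rw [h2]; exact h1
    · rw [h3, ← h1, Sp_Sp]
    · simp only [Finset.mem_insert, h2, h3, false_or] at hi
      exact hh.S i hi

lemma leaf_iff (h : Inv d m w D s u g) (hd : d ∉ D) (hdm : d.val < m) {n : Fin 32}
    (hn : n.val = m) :
    Compat (m + 1) (insert d (insert n D)) (swap d n * s) u (Function.update g n (Sp * g d)) Γ ↔
      Compat m D s u g Γ ∧ (∀ i : Fin 32, i.val < m → Sp • cs Γ (g d) ≠ cs Γ (g i)) ∧
      Up • Sp • cs Γ (g d) = Sp • cs Γ (g d) := by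
  have hnD : n ∉ D := fun hh => by have := h.D_lt _ hh; omega
  have hdn : d ≠ n := by rintro rfl; omega
  have hs := swap_s (h.s_nD _ hd) (h.s_nD _ hnD)
  have hun := h.u_ge n (by omega)
  have hg : ∀ i : Fin 32, i.val < m → Function.update g n (Sp * g d) i = g i := fun i hi => by
    rw [Function.update_of_ne]; rintro rfl; omega
  have hgn : Function.update g n (Sp * g d) n = Sp * g d := Function.update_self _ _ _
  constructor
  · intro hh
    refine ⟨⟨fun i j hi hj hij => hh.inj i j (by omega) (by omega) ?_, fun i hi => ?_,
      fun i hi => ?_⟩, fun i hi hc => ?_, ?_⟩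
    · rw [hg i hi, hg j hj]; exact hij
    · have := hh.U i (by omega)
      rwa [hg i hi, hg _ (h.u_lt hi)] at this
    · have := hh.S i (by simp [hi])
      rw [hs, if_neg, if_neg, hg i (h.D_lt i hi), hg _ (h.s_lt (h.D_lt i hi))] at this
      · exact this
      · rintro rfl; exact hnD hi
      · rintro rfl; exact hd hi
    · have := hh.inj n i (by omega) (by omega) (by rw [hg i hi, hgn]; exact hc)
      rw [← this] at hi
      omega
    · have := hh.U n (by omega)
      rw [hun, hgn] at this
      exact this
  · rintro ⟨hh, h1, h2⟩
    have lt_or : ∀ i : Fin 32, i.val < m + 1 → i = n ∨ i.val < m := by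
      intro i hi
      by_cases hin : i = n
      · exact Or.inl hin
      · have : i.val ≠ n.val := fun hh => hin (Fin.ext hh)
        right; omega
    refine ⟨fun i j hi hj hij => ?_, fun i hi => ?_, fun i hi => ?_⟩
    · rcases lt_or i hi with rfl | hi' <;> rcases lt_or j hj with rfl | hj'
      · rfl
      · rw [hgn, hg j hj'] at hij
        exact absurd hij (h1 j hj')
      · rw [hgn, hg i hi'] at hij
        exact absurd hij.symm (h1 i hi')
      · rw [hg i hi', hg j hj'] at hij
        exact hh.inj i j hi' hj' hij
    · rcases lt_or i hi with rfl | hi'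
      · rw [hun, hgn]; exact h2
      · rw [hg i hi', hg _ (h.u_lt hi')]; exact hh.U i hi'
    · rw [hs]
      split_ifs with h3 h4
      · rw [hgn, h3, hg d hdm]; rfl
      · rw [h4, hgn, hg d hdm]
        exact Sp_Sp (cs Γ (g d))
      · simp only [Finset.mem_insert, h3, h4, false_or] at hi
        rw [hg i (h.D_lt i hi), hg _ (h.s_lt (h.D_lt i hi))]
        exact hh.S i hi

lemma vert_iff (h : Inv d m w D s u g) (hd : d ∉ D) (hdm : d.val < m) {a b c : Fin 32}
    (ha : a.val = m) (hb : b.val = m + 1) (hc : c.val = m + 2) :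
    Compat (m + 3) (insert d (insert a D)) (swap d a * s)
      (swap a b * (swap b c * u)) (gv g d a b c) Γ ↔
      Compat m D s u g Γ ∧ (∀ i : Fin 32, i.val < m → Sp • cs Γ (g d) ≠ cs Γ (g i)) ∧
      Up • Sp • cs Γ (g d) ≠ Sp • cs Γ (g d) := by
  have haD : a ∉ D := fun hh => by have := h.D_lt _ hh; omega
  have hda : d ≠ a := by rintro rfl; omega
  have hs := swap_s (h.s_nD _ hd) (h.s_nD _ haD)
  have hua := h.u_ge a (by omega)
  have hub := h.u_ge b (by omega)
  have huc := h.u_ge c (by omega)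
  have hab : a ≠ b := by rintro rfl; omega
  have hac : a ≠ c := by rintro rfl; omega
  have hbc : b ≠ c := by rintro rfl; omega
  have hu' := swap_u hab hac hbc hua hub huc
  have lt_or : ∀ i : Fin 32, i.val < m + 3 → i = a ∨ i = b ∨ i = c ∨ i.val < m := by
    intro i hi
    by_cases h1 : i = a
    · exact Or.inl h1
    by_cases h2 : i = b
    · exact Or.inr (Or.inl h2)
    by_cases h3 : i = c
    · exact Or.inr (Or.inr (Or.inl h3))
    have h1' : i.val ≠ a.val := fun hh => h1 (Fin.ext hh)
    have h2' : i.val ≠ b.val := fun hh => h2 (Fin.ext hh)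
    have h3' : i.val ≠ c.val := fun hh => h3 (Fin.ext hh)
    right; right; right; omega
  have hlta : ∀ i : Fin 32, i.val < m → i ≠ a ∧ i ≠ b ∧ i ≠ c := by
    intro i h1
    refine ⟨?_, ?_, ?_⟩ <;> (rintro rfl; omega)
  have hg : ∀ i : Fin 32, i.val < m → gv g d a b c i = g i := fun i hi => by
    obtain ⟨h1, h2, h3⟩ := hlta i hi
    rw [gv, if_neg h1, if_neg h2, if_neg h3]
  have hu : ∀ i : Fin 32, i.val < m → (swap a b * (swap b c * u)) i = u i := fun i hi => by
    obtain ⟨h1, h2, h3⟩ := hlta i hi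
    rw [hu', if_neg h1, if_neg h2, if_neg h3]
  have hga : gv g d a b c a = Sp * g d := by rw [gv, if_pos rfl]
  have hgb : gv g d a b c b = Up * (Sp * g d) := by rw [gv, if_neg hab.symm, if_pos rfl]
  have hgc : gv g d a b c c = Up * (Up * (Sp * g d)) := by
    rw [gv, if_neg hac.symm, if_neg hbc.symm, if_pos rfl]
  have u_a : (swap a b * (swap b c * u)) a = b := by rw [hu', if_pos rfl]
  have u_b : (swap a b * (swap b c * u)) b = c := by rw [hu', if_neg hab.symm, if_pos rfl]
  have u_c : (swap a b * (swap b c * u)) c = a := by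
    rw [hu', if_neg hac.symm, if_neg hbc.symm, if_pos rfl]
  constructor
  · intro hh
    refine ⟨⟨fun i j hi hj hij => hh.inj i j (by omega) (by omega) ?_, fun i hi => ?_,
      fun i hi => ?_⟩, fun i hi hcc => ?_, fun hcc => ?_⟩
    · rw [hg i hi, hg j hj]; exact hij
    · have := hh.U i (by omega)
      rwa [hu i hi, hg i hi, hg _ (h.u_lt hi)] at this
    · have := hh.S i (by simp [hi])
      rw [hs, if_neg, if_neg, hg i (h.D_lt i hi), hg _ (h.s_lt (h.D_lt i hi))] at this
      · exact this
      · rintro rfl; exact haD hi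
      · rintro rfl; exact hd hi
    · have := hh.inj a i (by omega) (by omega) (by rw [hg i hi, hga]; exact hcc)
      rw [← this] at hi
      omega
    · exact hab (hh.inj b a (by omega) (by omega) (by rw [hga, hgb]; exact hcc)).symm
  · rintro ⟨hh, h1, h2⟩
    have h1b : ∀ i : Fin 32, i.val < m → Up • Sp • cs Γ (g d) ≠ cs Γ (g i) := by
      intro i hi hcc
      refine h1 (u (u i)) (h.u_lt (h.u_lt hi)) ?_
      rw [← hh.U _ (h.u_lt hi), ← hh.U _ hi, ← hcc, Up_Up]
    have h1c : ∀ i : Fin 32, i.val < m → Up • Up • Sp • cs Γ (g d) ≠ cs Γ (g i) := by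
      intro i hi hcc
      refine h1 (u i) (h.u_lt hi) ?_
      rw [← hh.U _ hi, ← hcc, Up_Up]
    have hac2 : Up • Up • Sp • cs Γ (g d) ≠ Sp • cs Γ (g d) := by
      intro hcc
      apply h2
      have := congrArg (fun x => Up • x) hcc
      simp only [Up_Up] at this
      exact this.symm
    have hbc2 : Up • Up • Sp • cs Γ (g d) ≠ Up • Sp • cs Γ (g d) := by
      intro hcc
      exact h2 (smul_left_cancel _ hcc)
    refine ⟨fun i j hi hj hij => ?_, fun i hi => ?_, fun i hi => ?_⟩
    · rcases lt_or i hi with rfl | rfl | rfl | hi' <;>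
        rcases lt_or j hj with rfl | rfl | rfl | hj'
      · rfl
      · rw [hga, hgb] at hij; exact absurd hij.symm h2
      · rw [hga, hgc] at hij; exact absurd hij.symm hac2
      · rw [hga, hg j hj'] at hij; exact absurd hij (h1 j hj')
      · rw [hga, hgb] at hij; exact absurd hij h2
      · rfl
      · rw [hgb, hgc] at hij; exact absurd hij.symm hbc2
      · rw [hgb, hg j hj'] at hij; exact absurd hij (h1b j hj')
      · rw [hga, hgc] at hij; exact absurd hij hac2
      · rw [hgb, hgc] at hij; exact absurd hij hbc2
      · rfl
      · rw [hgc, hg j hj'] at hij; exact absurd hij (h1c j hj')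
      · rw [hga, hg i hi'] at hij; exact absurd hij.symm (h1 i hi')
      · rw [hgb, hg i hi'] at hij; exact absurd hij.symm (h1b i hi')
      · rw [hgc, hg i hi'] at hij; exact absurd hij.symm (h1c i hi')
      · rw [hg i hi', hg j hj'] at hij
        exact hh.inj i j hi' hj' hij
    · rcases lt_or i hi with rfl | rfl | rfl | hi'
      · rw [u_a, hga, hgb]; rfl
      · rw [u_b, hgb, hgc]; rfl
      · rw [u_c, hgc, hga]; exact Up_Up (Sp • cs Γ (g d))
      · rw [hu i hi', hg i hi', hg _ (h.u_lt hi')]; exact hh.U i hi'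
    · rw [hs]
      split_ifs with h3 h4
      · rw [hga, h3, hg d hdm]; rfl
      · rw [h4, hga, hg d hdm]
        exact Sp_Sp (cs Γ (g d))
      · simp only [Finset.mem_insert, h3, h4, false_or] at hi
        rw [hg i (h.D_lt i hi), hg _ (h.s_lt (h.D_lt i hi))]
        exact hh.S i hi

/-- The Euler characteristic bookkeeping. -/
noncomputable def AA (m : ℕ) (s u : Perm (Fin 32)) : ℕ := cyc s + cyc u + cyc (s * u) + 2 * m

lemma AA_close (h : Inv d m w D s u g) (hd : d ∉ D) {e : Fin 32} (he : e ∉ D) (hde : d ≠ e) :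
    ((s * u).SameCycle d e → AA m (swap d e * s) u = AA m s u) ∧
    (¬ (s * u).SameCycle d e → AA m (swap d e * s) u + 2 = AA m s u) := by
  have h1 := cyc_swap_fixed hde (h.s_nD _ he)
  unfold AA
  rw [mul_assoc]
  constructor
  · intro hh
    have := cyc_swap_same hde hh
    omega
  · intro hh
    have := cyc_swap_not hh
    omega

lemma AA_leaf (h : Inv d m w D s u g) (hdm : d.val < m) {n : Fin 32} (hn : n.val = m) :
    AA (m + 1) (swap d n * s) u = AA m s u := by
  have hnD : n ∉ D := fun hh => by have := h.D_lt _ hh; omega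
  have hdn : d ≠ n := by rintro rfl; omega
  have hsn := h.s_nD _ hnD
  have hun := h.u_ge n (by omega)
  have h1 := cyc_swap_fixed hdn hsn
  have h2 := cyc_swap_fixed (p := s * u) hdn (by rw [Perm.mul_apply, hun, hsn])
  unfold AA
  rw [mul_assoc]
  omega

lemma AA_vert (h : Inv d m w D s u g) (hdm : d.val < m) {a b c : Fin 32}
    (ha : a.val = m) (hb : b.val = m + 1) (hc : c.val = m + 2) :
    AA (m + 3) (swap d a * s) (swap a b * (swap b c * u)) = AA m s u := by
  have haD : a ∉ D := fun hh => by have := h.D_lt _ hh; omega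
  have hbD : b ∉ D := fun hh => by have := h.D_lt _ hh; omega
  have hcD : c ∉ D := fun hh => by have := h.D_lt _ hh; omega
  have hda : d ≠ a := by rintro rfl; omega
  have hdb : d ≠ b := by rintro rfl; omega
  have hdc : d ≠ c := by rintro rfl; omega
  have hsa := h.s_nD _ haD
  have hsb := h.s_nD _ hbD
  have hsc := h.s_nD _ hcD
  have hua := h.u_ge a (by omega)
  have hub := h.u_ge b (by omega)
  have huc := h.u_ge c (by omega)
  have hab : a ≠ b := by rintro rfl; omega
  have hac : a ≠ c := by rintro rfl; omega
  have hbc : b ≠ c := by rintro rfl; omega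
  have h1 := cyc_swap_fixed hda hsa
  have h2 := cyc_swap_fixed hbc huc
  have h3 : cyc (swap b c * u) = cyc (swap a b * (swap b c * u)) + 1 := by
    rw [swap_comm a b]
    refine cyc_swap_fixed hab.symm ?_
    rw [swap_s hub huc, if_neg hab, if_neg hac, hua]
  have hcomm : swap d a * s * (swap a b * (swap b c * u)) =
      swap d a * (swap a b * (swap b c * (s * u))) := by
    rw [mul_assoc]
    congr 1
    have e1 : ∀ x y, s x = x → s y = y → s * swap x y = swap x y * s := by
      intro x y hx hy
      rw [mul_swap_eq_swap_mul, hx, hy]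
    rw [← mul_assoc, e1 a b hsa hsb, mul_assoc, ← mul_assoc s, e1 b c hsb hsc, mul_assoc]
  have hta : (s * u) a = a := by rw [Perm.mul_apply, hua, hsa]
  have htb : (s * u) b = b := by rw [Perm.mul_apply, hub, hsb]
  have htc : (s * u) c = c := by rw [Perm.mul_apply, huc, hsc]
  have h4 := cyc_swap_fixed hbc htc
  have h5 : cyc (swap b c * (s * u)) = cyc (swap a b * (swap b c * (s * u))) + 1 := by
    rw [swap_comm a b]
    refine cyc_swap_fixed hab.symm ?_
    rw [swap_s htb htc, if_neg hab, if_neg hac, hta]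
  have h6 : cyc (swap a b * (swap b c * (s * u))) =
      cyc (swap d a * (swap a b * (swap b c * (s * u)))) + 1 := by
    rw [swap_comm d a]
    refine cyc_swap_not fun hh => hda ?_
    have htd : (s * u) d ∉ ({a, b, c} : Finset (Fin 32)) := by
      have : ((s * u) d).val < m := by
        rw [Perm.mul_apply]; exact h.s_lt (h.u_lt hdm)
      simp only [Finset.mem_insert, Finset.mem_singleton]
      rintro (h1 | h1 | h1) <;> rw [h1] at this <;> omega
    have hcl : ∀ n : ℕ, (((swap a b * (swap b c * (s * u))) ^ n) d).val < m := by
      intro n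
      induction n with
      | zero => exact hdm
      | succ n ih =>
        rw [pow_succ', Perm.mul_apply]
        set x := ((swap a b * (swap b c * (s * u))) ^ n) d
        rw [swap_u hab hac hbc hta htb htc, if_neg, if_neg, if_neg, Perm.mul_apply]
        · exact h.s_lt (h.u_lt ih)
        · intro h1; rw [h1] at ih; omega
        · intro h1; rw [h1] at ih; omega
        · intro h1; rw [h1] at ih; omega
    obtain ⟨n, -, hn⟩ := hh.symm.exists_pow_eq'
    have := hcl n
    rw [hn] at this
    omega
  unfold AA
  rw [hcomm]
  omega

lemma Compat.w_le (h : Inv d m w D s u g) (hc : Compat m D s u g Γ) (hΓ : Γ.index ≠ 0) :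
    w ≤ tfIdx Γ := by
  classical
  have : Finite (PSL2Z ⧸ Γ) := Nat.finite_of_card_ne_zero hΓ
  have hm : m ≤ 32 := by have := h.m_le; have := h.w_le; omega
  have h1 : m ≤ Γ.index := by
    have : Nat.card (Fin m) ≤ Nat.card (PSL2Z ⧸ Γ) := by
      refine Nat.card_le_card_of_injective (fun i => cs Γ (g (Fin.castLE hm i))) ?_
      intro i j hij
      have := hc.inj _ _ (by simp) (by simp) hij
      exact Fin.castLE_injective _ this
    rw [Nat.card_fin] at this
    exact this
  have h2 : (D.filter fun i => s i = i).card ≤ nFix Sp Γ := by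
    rw [← Fintype.card_coe, ← Nat.card_eq_fintype_card]
    refine Nat.card_le_card_of_injective (fun i => ⟨cs Γ (g i.1), ?_⟩) ?_
    · have := i.2
      rw [Finset.mem_filter] at this
      have h3 := hc.S _ this.1
      rwa [this.2] at h3
    · rintro ⟨i, hi⟩ ⟨j, hj⟩ hij
      rw [Finset.mem_filter] at hi hj
      exact Subtype.ext (hc.inj _ _ (h.D_lt _ hi.1) (h.D_lt _ hj.1) (congrArg Subtype.val hij))
  have h3 : (Finset.univ.filter fun i : Fin 32 => i.val < m ∧ u i = i).card ≤ nFix Up Γ := by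
    rw [← Fintype.card_coe, ← Nat.card_eq_fintype_card]
    refine Nat.card_le_card_of_injective (fun i => ⟨cs Γ (g i.1), ?_⟩) ?_
    · have := i.2
      rw [Finset.mem_filter] at this
      have h3 := hc.U _ this.2.1
      rwa [this.2.2] at h3
    · rintro ⟨i, hi⟩ ⟨j, hj⟩ hij
      rw [Finset.mem_filter] at hi hj
      exact Subtype.ext (hc.inj _ _ hi.2.1 hj.2.1 (congrArg Subtype.val hij))
  have h4 := h.wt
  unfold tfIdx
  show w ≤ Γ.index + 3 * nFix Sp Γ + 2 * nFix Up Γ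
  omega

open Classical in
/-- Total weight of the compatible subgroups. -/
noncomputable def val (k m : ℕ) (D : Finset (Fin 32)) (s u : Perm (Fin 32)) (g : Fin 32 → PSL2Z) :
    ENNReal :=
  ∑' Γ : Subgroup PSL2Z, if Compat m D s u g Γ then (WW k Γ : ENNReal) else 0

lemma val_zero {k : ℕ} (h : ∀ Γ, Compat m D s u g Γ → ¬ CC k Γ) : val k m D s u g = 0 := by
  unfold val
  rw [ENNReal.tsum_eq_zero]
  intro Γ
  split_ifs with hc
  · unfold WW; rw [if_neg (h Γ hc)]; simp
  · rfl

lemma val_big {k : ℕ} (h : Inv d m w D s u g) (hw : 24 < w) : val k m D s u g = 0 := by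
  refine val_zero fun Γ hc hC => ?_
  have h1 := hc.w_le h hC.1.1
  have h2 := hC.1.2.2
  omega

lemma val_branch {k : ℕ} (h : Inv d m w D s u g) (hd : d ∉ D) (hdm : d.val < m) {a b c : Fin 32}
    (ha : a.val = m) (hb : b.val = m + 1) (hc : c.val = m + 2) :
    val k m D s u g =
      (∑ e : Fin 32, if d.val < e.val ∧ e.val < m ∧ e ∉ D then
        val k m (insert d (insert e D)) (swap d e * s) u g else 0) +
      (val k m (insert d D) s u g +
      (val k (m + 1) (insert d (insert a D)) (swap d a * s) u (Function.update g a (Sp * g d)) +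
      val k (m + 3) (insert d (insert a D)) (swap d a * s)
        (swap a b * (swap b c * u)) (gv g d a b c))) := by
  classical
  have hE : (∑ e : Fin 32, if d.val < e.val ∧ e.val < m ∧ e ∉ D then
        val k m (insert d (insert e D)) (swap d e * s) u g else 0) =
      ∑' Γ : Subgroup PSL2Z, ∑ e : Fin 32, if d.val < e.val ∧ e.val < m ∧ e ∉ D then
        (if Compat m (insert d (insert e D)) (swap d e * s) u g Γ then (WW k Γ : ENNReal) else 0)
        else 0 := by
    rw [Summable.tsum_finsetSum (fun _ _ => ENNReal.summable)]
    refine Finset.sum_congr rfl fun e _ => ?_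
    split_ifs
    · rfl
    · simp
  rw [hE]
  unfold val
  rw [← ENNReal.tsum_add, ← ENNReal.tsum_add, ← ENNReal.tsum_add]
  refine tsum_congr fun Γ => ?_
  simp only [leaf_iff h hd hdm ha, vert_iff h hd hdm ha hb hc, fix_iff (D := D) (s := s), h.s_nD d hd]
  have hcl : ∀ e : Fin 32, (if d.val < e.val ∧ e.val < m ∧ e ∉ D then
        (if Compat m (insert d (insert e D)) (swap d e * s) u g Γ then (WW k Γ : ENNReal) else 0)
        else 0) = if d.val < e.val ∧ e.val < m ∧ e ∉ D then
        (if Compat m D s u g Γ ∧ Sp • cs Γ (g d) = cs Γ (g e) then (WW k Γ : ENNReal) else 0)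
        else 0 := by
    intro e
    split_ifs with h1 h2 h3 h3
    · rfl
    · exact absurd ((close_iff h hd h1.2.2 (by intro hh; rw [hh] at h1; omega)).1 h2) h3
    · exact absurd ((close_iff h hd h1.2.2 (by intro hh; rw [hh] at h1; omega)).2 h3) h2
    · rfl
    · rfl
  simp only [hcl]
  by_cases hC : Compat m D s u g Γ
  swap
  · simp [hC]
  simp only [hC, true_and, if_true]
  by_cases hx : ∃ e : Fin 32, e.val < m ∧ Sp • cs Γ (g d) = cs Γ (g e)
  · obtain ⟨e, hem, he⟩ := hx
    have heD : e ∉ D := by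
      intro hh
      have h1 := hC.S e hh
      rw [← he, Sp_Sp] at h1
      have h2 := hC.inj _ _ hdm (h.s_lt hem) h1
      rw [h2] at hd
      exact hd (h.s_mem hh)
    have hn : ¬ ∀ i : Fin 32, i.val < m → Sp • cs Γ (g d) ≠ cs Γ (g i) := fun hh => hh e hem he
    simp only [hn, false_and, if_false, add_zero]
    have huniq : ∀ i : Fin 32, i.val < m → Sp • cs Γ (g d) = cs Γ (g i) → i = e := by
      intro i hi hh
      exact hC.inj _ _ hi hem (hh.symm.trans he)
    by_cases hed : e = d
    · subst hed
      rw [if_pos he, Finset.sum_eq_zero, zero_add]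
      intro i _
      split_ifs with h1 h2
      · have := huniq i h1.2.1 h2
        rw [this] at h1; omega
      · rfl
      · rfl
    · have hde : d.val < e.val := by
        by_contra hh
        have h1 : e.val ≠ d.val := fun h2 => hed (Fin.ext h2)
        exact heD (h.D_d e (by omega))
      rw [if_neg (fun hh => hed (huniq d hdm hh).symm), add_zero, Finset.sum_eq_single e]
      · rw [if_pos ⟨hde, hem, heD⟩, if_pos he]
      · intro i _ hie
        split_ifs with h1 h2
        · exact absurd (huniq i h1.2.1 h2) hie
        · rfl
        · rfl
      · intro hh; exact absurd (Finset.mem_univ _) hh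
  · push Not at hx
    have h0 : ∀ i : Fin 32, i.val < m → Sp • cs Γ (g d) ≠ cs Γ (g i) := hx
    rw [Finset.sum_eq_zero, if_neg (h0 d hdm), zero_add, zero_add]
    · by_cases hf : Up • Sp • cs Γ (g d) = Sp • cs Γ (g d)
      · rw [if_pos ⟨h0, hf⟩, if_neg (fun hh => hh.2 hf), add_zero]
      · rw [if_neg (fun hh => hf hh.2), if_pos ⟨h0, hf⟩, zero_add]
    · intro i _
      split_ifs with h1 h2
      · exact absurd h2 (h0 i h1.2.1)
      · rfl
      · rfl

end

end K24


namespace K24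

/-- If-then-else for natural numbers, written with the recursor. -/
local notation "ifN(" b "," t "," e ")" => @Bool.rec (fun _ => ℕ) e t b

/-- If-then-else for Booleans, written with the recursor. -/
local notation "ifB(" b "," t "," e ")" => @Bool.rec (fun _ => Bool) e t b

/-- Continue with the value of `x` (makes the kernel evaluate `x` to a numeral first). -/
def frcN (x : ℕ) (f : ℕ → ℕ) : ℕ := @Nat.rec (fun _ => ℕ) (f 0) (fun n _ => f (Nat.succ n)) x

/-- Boolean version of `frcN`. -/
def frcB (x : ℕ) (f : ℕ → Bool) : Bool :=
  @Nat.rec (fun _ => Bool) (f 0) (fun n _ => f (Nat.succ n)) x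

/-- The `i`-th five-bit digit of `t`. -/
def gt (t i : ℕ) : ℕ := Nat.land (Nat.shiftRight t (Nat.mul 5 i)) 31

/-- Put the digit `v` into the (empty) place `i` of `t`. -/
def pt (t i v : ℕ) : ℕ := Nat.lor t (Nat.shiftLeft v (Nat.mul 5 i))

/-- `f 0 + ... + f (n-1)`. -/
def sm (n : ℕ) (f : ℕ → ℕ) : ℕ := Nat.rec 0 (fun e ih => Nat.add ih (f e)) n

/-- The value of the involution at `i` (table entries are shifted by one, `0` means undefined). -/
def sv (S i : ℕ) : ℕ := Nat.sub (gt S i) 1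

/-- The partial product `T' = S' U`, where `S'` is the identity where `S` is undefined. -/
def tv (S U x : ℕ) : ℕ :=
  ifN(Nat.beq (gt S (gt U x)) 0, gt U x, Nat.sub (gt S (gt U x)) 1)

/-- Sum of `f x` over the `x ≠ d` with `S x` undefined, in the `T'`-cycle of `d`. -/
def walk (S U d : ℕ) (f : ℕ → ℕ) (fuel : ℕ) : ℕ → ℕ :=
  Nat.rec (fun _ => 0)
    (fun _ ih y => (frcN (y) (fun x => ifN(Nat.beq x d, 0,
      ifN(Nat.beq (gt S x) 0, Nat.add (f x) (ih (tv S U x)), ih (tv S U x)))))) fuel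

/-- Number of fixed points of `f` on `{0, ..., m-1}`. -/
def fixc (m : ℕ) (f : ℕ → ℕ) : ℕ := sm m fun x => ifN(Nat.beq (f x) x, 1, 0)

/-- Try to extend `0 ↦ r` to an automorphism of the table; the images of `0, ..., i-1` are the
digits of `F`. -/
def autStep (S U i F : ℕ) (v : ℕ) (next : ℕ → Bool) : Bool :=
  (frcB (pt F i v) (fun F' =>
    ifB(ifB(Nat.ble (sv S i) i, Nat.beq (gt F' (sv S i)) (sv S v), true),
      ifB(ifB(Nat.ble (gt U i) i, Nat.beq (gt F' (gt U i)) (gt U v), true),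
        ifB(ifB(Nat.beq (gt U (Nat.sub i 1)) i, Nat.beq v (gt U (gt F (Nat.sub i 1))), true),
          next F', false), false), false)))

def autGo (S U m : ℕ) (fuel : ℕ) : ℕ → ℕ → Bool :=
  Nat.rec (fun _ _ => true)
    (fun _ ih i F => ifB(Nat.ble m i, true,
      (frcB (ifN(Nat.blt (sv S i) i, sv S (gt F (sv S i)), gt U (gt F (Nat.sub i 1)))) (fun v =>
        autStep S U i F v (ih (Nat.succ i)))))) fuel

/-- Does `0 ↦ r` extend to an automorphism? -/
def autOK (S U m r : ℕ) : Bool :=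
  ifB(Nat.beq r 0, true,
    ifB(ifB(Nat.beq (sv S 0) 0, Nat.beq (sv S r) r, true),
      ifB(ifB(Nat.beq (gt U 0) 0, Nat.beq (gt U r) r, true), autGo S U m m 1 r, false), false))

/-- The four root types: fixed by `S`, by `U`, by `T`, and no condition. -/
def rootFn (k S U : ℕ) : ℕ → ℕ :=
  cond (Nat.beq k 0) (sv S)
    (cond (Nat.beq k 1) (gt U) (cond (Nat.beq k 2) (fun x => sv S (gt U x)) (fun x => x)))

/-- Contribution of a complete table. -/
def leaf (k m w S U : ℕ) : ℕ :=
  ifN(Nat.beq w 24,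
    ifN(Nat.beq (rootFn k S U 0) 0,
      ifN(Nat.beq (sm k fun j => fixc m (rootFn j S U)) 0,
        Nat.mul (Nat.div KK (fixc m (rootFn k S U)))
          (sm m fun r => ifN(Nat.beq (rootFn k S U r) r, ifN(autOK S U m r, 1, 0), 0)),
        0), 0), 0)

/-- Allowed identifications of `d < e`. -/
def okC (k d e U : ℕ) : Bool :=
  cond (Nat.beq k 0) (Nat.blt 0 d)
    (cond (Nat.beq k 1) true
      (cond (Nat.beq k 2) (cond (Nat.beq d 0) (Nat.beq e 1) true)
        (cond (Nat.beq (gt U d) e) false (cond (Nat.beq (gt U e) d) false true))))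

def okF (k : ℕ) : Bool := Nat.beq k 0

def okL (k d : ℕ) : Bool := cond (Nat.beq k 0) (Nat.blt 0 d) (Nat.beq k 1)

def okV (k d : ℕ) : Bool :=
  cond (Nat.beq k 0) (Nat.blt 0 d) (cond (Nat.beq k 2) (Nat.blt 0 d) true)

/-- The search. -/
def go (k : ℕ) (fuel : ℕ) : ℕ → ℕ → ℕ → ℕ → ℕ → ℕ :=
  Nat.rec (fun _ _ _ _ _ => 0)
    (fun _ ih d m w S U =>
      ifN(Nat.ble w 24,
      ifN(Nat.beq d m, leaf k m w S U,
        ifN(Nat.beq (gt S d) 0,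
          Nat.add
            (walk S U d (fun e => ifN(okC k d e U,
                  (frcN (pt (pt S d (Nat.succ e)) e (Nat.succ d)) (fun S' =>
                    ih (Nat.succ d) m w S' U)), 0)) m (tv S U d))
            (ifN(Nat.ble 24 w, 0,
            (frcN (Nat.add w 3) (fun w' =>
            (Nat.add
              (ifN(okF k, (frcN (pt S d (Nat.succ d)) (fun S' => ih (Nat.succ d) m w' S' U)), 0))
              (Nat.add
                (ifN(okL k d, (frcN (pt (pt S d (Nat.succ m)) m (Nat.succ d)) (fun S' =>
                  (frcN (pt U m m) (fun U' => ih (Nat.succ d) (Nat.succ m) w' S' U')))), 0))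
                (ifN(okV k d, (frcN (pt (pt S d (Nat.succ m)) m (Nat.succ d)) (fun S' =>
                  (frcN (pt (pt (pt U m (Nat.add m 1)) (Nat.add m 1) (Nat.add m 2)) (Nat.add m 2) m) (fun U' =>
                    (frcN (Nat.add m 3) (fun m' => ih (Nat.succ d) m' w' S' U')))))), 0)))))))),
          ih (Nat.succ d) m w S U)), 0)) fuel

def U3 : ℕ := pt (pt (pt 0 0 1) 1 2) 2 0

def tot (k : ℕ) : ℕ := 
  cond (Nat.beq k 1) (go k 25 0 1 3 0 0) (cond (Nat.beq k 0) (Nat.add (go k 25 0 1 3 0 0) (go k 25 0 3 3 0 U3)) (go k 25 0 3 3 0 U3))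



lemma recN (b : Bool) (t e : ℕ) : ifN(b, t, e) = if b = true then t else e := by cases b <;> rfl
lemma recB (b t e : Bool) : ifB(b, t, e) = if b = true then t else e := by cases b <;> rfl
lemma frcN_eq (x : ℕ) (f : ℕ → ℕ) : frcN x f = f x := by cases x <;> rfl
lemma frcB_eq (x : ℕ) (f : ℕ → Bool) : frcB x f = f x := by cases x <;> rfl

lemma sm_eq (n : ℕ) (f : ℕ → ℕ) : sm n f = ∑ i ∈ Finset.range n, f i := by
  induction n with
  | zero => rfl
  | succ n ih => rw [Finset.sum_range_succ, ← ih]; rfl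

lemma beqN (a b : ℕ) : (Nat.beq a b = true) = (a = b) := propext (by simp)

lemma tv_eq (S U x : ℕ) : tv S U x = if gt S (gt U x) = 0 then gt U x else gt S (gt U x) - 1 := by
  unfold tv
  simp only [recN, beqN]
  rfl

lemma walk_zero (S U d : ℕ) (f : ℕ → ℕ) (y : ℕ) : walk S U d f 0 y = 0 := rfl

lemma walk_succ (S U d : ℕ) (f : ℕ → ℕ) (n y : ℕ) : walk S U d f (n + 1) y =
    if y = d then 0 else if gt S y = 0 then f y + walk S U d f n (tv S U y)
      else walk S U d f n (tv S U y) := by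
  have h : walk S U d f (n + 1) y = frcN y (fun x => ifN(Nat.beq x d, 0,
      ifN(Nat.beq (gt S x) 0, Nat.add (f x) (walk S U d f n (tv S U x)),
        walk S U d f n (tv S U x)))) := rfl
  rw [h]
  simp only [frcN_eq, recN, beqN]
  rfl

lemma fixc_eq (m : ℕ) (f : ℕ → ℕ) :
    fixc m f = ((Finset.range m).filter fun x => f x = x).card := by
  unfold fixc
  simp only [recN, beqN, sm_eq]
  rw [Finset.card_filter]

lemma autStep_iff (S U i F v : ℕ) (next : ℕ → Bool) : autStep S U i F v next = true ↔
    ((sv S i ≤ i → gt (pt F i v) (sv S i) = sv S v) ∧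
    (gt U i ≤ i → gt (pt F i v) (gt U i) = gt U v) ∧
    (gt U (i - 1) = i → v = gt U (gt F (i - 1))) ∧ next (pt F i v) = true) := by
  unfold autStep
  simp only [frcB_eq, recB]
  simp [imp_iff_not_or]

lemma autGo_zero (S U m i F : ℕ) : autGo S U m 0 i F = true := rfl

lemma autGo_succ (S U m n i F : ℕ) : autGo S U m (n + 1) i F = if m ≤ i then true else
    autStep S U i F (if sv S i < i then sv S (gt F (sv S i)) else gt U (gt F (i - 1)))
      (autGo S U m n (i + 1)) := by
  have h : autGo S U m (n + 1) i F = ifB(Nat.ble m i, true,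
      (frcB (ifN(Nat.blt (sv S i) i, sv S (gt F (sv S i)), gt U (gt F (Nat.sub i 1)))) (fun v =>
        autStep S U i F v (autGo S U m n (Nat.succ i))))) := rfl
  rw [h]
  simp only [frcB_eq, recB, recN]
  simp only [Nat.blt, Nat.ble_eq]
  rfl

lemma autOK_iff (S U m r : ℕ) : autOK S U m r = true ↔ (r = 0 ∨
    ((sv S 0 = 0 → sv S r = r) ∧ (gt U 0 = 0 → gt U r = r) ∧ autGo S U m m 1 r = true)) := by
  unfold autOK
  simp only [recB]
  simp
  try tauto

lemma leaf_eq (k m w S U : ℕ) : leaf k m w S U =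
    if w = 24 ∧ rootFn k S U 0 = 0 ∧ ∑ j ∈ Finset.range k, fixc m (rootFn j S U) = 0 then
      KK / fixc m (rootFn k S U) *
        ((Finset.range m).filter fun r => rootFn k S U r = r ∧ autOK S U m r = true).card
    else 0 := by
  unfold leaf
  simp only [recN, beqN, sm_eq]
  split_ifs with h1 h2 h3 h4 h4 h4 h4
  all_goals try tauto
  rw [Finset.card_filter]
  congr 1
  refine Finset.sum_congr rfl fun x _ => ?_
  split_ifs <;> tauto

lemma go_zero (k d m w S U : ℕ) : go k 0 d m w S U = 0 := rfl

lemma go_succ (k n d m w S U : ℕ) : go k (n + 1) d m w S U =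
    if w ≤ 24 then
      if d = m then leaf k m w S U else
        if gt S d = 0 then
          walk S U d (fun e => if okC k d e U = true then
            go k n (d + 1) m w (pt (pt S d (e + 1)) e (d + 1)) U else 0) m (tv S U d) +
          (if 24 ≤ w then 0 else
            ((if okF k = true then go k n (d + 1) m (w + 3) (pt S d (d + 1)) U else 0) +
            ((if okL k d = true then go k n (d + 1) (m + 1) (w + 3)
                (pt (pt S d (m + 1)) m (d + 1)) (pt U m m) else 0) +
            (if okV k d = true then go k n (d + 1) (m + 3) (w + 3)
                (pt (pt S d (m + 1)) m (d + 1))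
                (pt (pt (pt U m (m + 1)) (m + 1) (m + 2)) (m + 2) m) else 0))))
        else go k n (d + 1) m w S U
    else 0 := by
  have h : go k (n + 1) d m w S U =
      ifN(Nat.ble w 24,
      ifN(Nat.beq d m, leaf k m w S U,
        ifN(Nat.beq (gt S d) 0,
          Nat.add
            (walk S U d (fun e => ifN(okC k d e U,
                  (frcN (pt (pt S d (Nat.succ e)) e (Nat.succ d)) (fun S' =>
                    go k n (Nat.succ d) m w S' U)), 0)) m (tv S U d))
            (ifN(Nat.ble 24 w, 0,
            (frcN (Nat.add w 3) (fun w' =>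
            (Nat.add
              (ifN(okF k, (frcN (pt S d (Nat.succ d)) (fun S' => go k n (Nat.succ d) m w' S' U)), 0))
              (Nat.add
                (ifN(okL k d, (frcN (pt (pt S d (Nat.succ m)) m (Nat.succ d)) (fun S' =>
                  (frcN (pt U m m) (fun U' => go k n (Nat.succ d) (Nat.succ m) w' S' U')))), 0))
                (ifN(okV k d, (frcN (pt (pt S d (Nat.succ m)) m (Nat.succ d)) (fun S' =>
                  (frcN (pt (pt (pt U m (Nat.add m 1)) (Nat.add m 1) (Nat.add m 2)) (Nat.add m 2) m) (fun U' =>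
                    (frcN (Nat.add m 3) (fun m' => go k n (Nat.succ d) m' w' S' U')))))), 0)))))))),
          go k n (Nat.succ d) m w S U)), 0) := rfl
  rw [h]
  simp only [frcN_eq, recN, beqN, Nat.ble_eq]
  rfl

lemma go_big (k n d m w S U : ℕ) (hw : 24 < w) : go k n d m w S U = 0 := by
  cases n with
  | zero => rfl
  | succ n => rw [go_succ, if_neg (by omega)]

lemma gt_testBit (t i n : ℕ) : (gt t i).testBit n = (decide (n < 5) && t.testBit (5 * i + n)) := by
  have : gt t i = (t >>> (5 * i)) &&& 31 := rfl
  rw [this, Nat.testBit_and, Nat.testBit_shiftRight]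
  have h31 : (31 : ℕ) = 2 ^ 5 - 1 := rfl
  rw [h31, Nat.testBit_two_pow_sub_one, Bool.and_comm]

lemma gt_pt {t i v : ℕ} (h : gt t i = 0) (hv : v < 32) (j : ℕ) :
    gt (pt t i v) j = if j = i then v else gt t j := by
  apply Nat.eq_of_testBit_eq
  intro n
  have hp : pt t i v = t ||| (v <<< (5 * i)) := rfl
  rw [gt_testBit, hp, Nat.testBit_or, Nat.testBit_shiftLeft]
  have hv' : ∀ n, 5 ≤ n → v.testBit n = false := fun n hn =>
    Nat.testBit_lt_two_pow (lt_of_lt_of_le hv (by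
      calc 32 = 2 ^ 5 := rfl
        _ ≤ 2 ^ n := Nat.pow_le_pow_right (by norm_num) hn))
  split_ifs with hj
  · subst hj
    have h1 : ∀ n, (gt t j).testBit n = false := by rw [h]; simp
    by_cases hn : n < 5
    · have h2 := h1 n
      rw [gt_testBit] at h2
      simp [hn] at h2
      simp [hn, h2]
    · simp [hn, hv' n (by omega)]
  · rw [gt_testBit]
    by_cases hn : n < 5
    · simp only [hn, decide_true, Bool.true_and]
      rcases Nat.lt_or_gt_of_ne hj with h1 | h1
      · have : ¬ (5 * j + n ≥ 5 * i) := by omega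
        simp [this]
      · rw [hv' (5 * j + n - 5 * i) (by omega)]; simp
    · simp [hn]

lemma gt_zero (j : ℕ) : gt 0 j = 0 := by
  apply Nat.eq_of_testBit_eq
  intro n
  rw [gt_testBit]; simp

/-- The tables represent the permutations. -/
structure Link (m : ℕ) (D : Finset (Fin 32)) (s u : Equiv.Perm (Fin 32)) (S U : ℕ) : Prop where
  hS : ∀ i : Fin 32, gt S i = if i ∈ D then (s i).val + 1 else 0
  hU : ∀ i : Fin 32, gt U i = if i.val < m then (u i).val else 0

section
open Equiv Equiv.Perm
variable {d : Fin 32} {m w : ℕ} {D : Finset (Fin 32)} {s u : Perm (Fin 32)} {g : Fin 32 → PSL2Z}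
  {S U : ℕ}

lemma Link.tv (hl : Link m D s u S U) (h : Inv d m w D s u g) {x : Fin 32} (hx : x.val < m) :
    tv S U x = ((s * u) x).val := by
  rw [tv_eq, hl.hU, if_pos hx, hl.hS, Perm.mul_apply]
  by_cases hD : u x ∈ D
  · simp [hD]
  · simp [hD, h.s_nD _ hD]

lemma Link.gtS (hl : Link m D s u S U) (x : Fin 32) : gt S x = 0 ↔ x ∉ D := by
  rw [hl.hS]; by_cases h : x ∈ D <;> simp [h]

lemma walk_eq (hl : Link m D s u S U) (h : Inv d m w D s u g) (hd : d.val < m) (f : ℕ → ℕ) :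
    walk S U d f m (K24.tv S U d) = ∑ e : Fin 32,
      if d.val < e.val ∧ e.val < m ∧ e ∉ D ∧ (s * u).SameCycle d e then f e else 0 := by
  classical
  set t := s * u with ht
  have hex : ∃ n, 0 < n ∧ (t ^ n) d = d :=
    ⟨orderOf t, orderOf_pos t, by rw [pow_orderOf_eq_one]; rfl⟩
  obtain ⟨hpos, hfix⟩ := Nat.find_spec hex
  set n := Nat.find hex
  have hmin : ∀ m < n, 0 < m → (t ^ m) d ≠ d := fun m hm h0 h =>
    Nat.find_min hex hm ⟨h0, h⟩
  have hlt : ∀ i, ((t ^ i) d).val < m := by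
    intro i
    induction i with
    | zero => exact hd
    | succ i ih =>
      rw [pow_succ', Perm.mul_apply, ht, Perm.mul_apply]
      exact h.s_lt (h.u_lt ih)
  have hinj : ∀ i j, i < n → j < n → (t ^ i) d = (t ^ j) d → i ≤ j := by
    intro i j hi hj hij
    by_contra hh
    refine hmin (i - j) (by omega) (by omega) ?_
    have : i = j + (i - j) := by omega
    rw [this, pow_add, Perm.mul_apply] at hij
    exact (t ^ j).injective hij
  have hinj' : Set.InjOn (fun i => (t ^ i) d) (Set.Iio n) := by
    intro i hi j hj hij
    exact le_antisymm (hinj i j hi hj hij) (hinj j i hj hi hij.symm)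
  have hnm : n ≤ m := by
    have h1 : ((Finset.range n).image fun i => ((t ^ i) d).val).card = n := by
      rw [Finset.card_image_of_injOn, Finset.card_range]
      intro i hi j hj hij
      simp only [Finset.coe_range] at hi hj
      exact hinj' hi hj (Fin.ext hij)
    rw [← h1]
    have h2 : ((Finset.range n).image fun i => ((t ^ i) d).val) ⊆ Finset.range m := by
      intro x hx
      rw [Finset.mem_image] at hx
      obtain ⟨i, -, rfl⟩ := hx
      exact Finset.mem_range.2 (hlt i)
    simpa using Finset.card_le_card h2
  let F : Fin 32 → ℕ := fun x => if x ∉ D then f x else 0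
  have key : ∀ fuel i, 1 ≤ i → i ≤ n → n ≤ i + fuel →
      walk S U d f fuel ((t ^ i) d).val = ∑ l ∈ Finset.Ico i n, F ((t ^ l) d) := by
    intro fuel
    induction fuel with
    | zero =>
      intro i h1 h2 h3
      have : i = n := by omega
      rw [this]; simp [walk_zero]
    | succ fuel ih =>
      intro i h1 h2 h3
      rw [walk_succ]
      rcases Nat.eq_or_lt_of_le h2 with h4 | h4
      · rw [h4, hfix]; simp
      · rw [if_neg (fun hh => hmin i h4 h1 (Fin.ext hh)), hl.tv h (hlt i), ← Perm.mul_apply t,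
          ← pow_succ', ih (i + 1) (by omega) h4 (by omega), Finset.sum_eq_sum_Ico_succ_bot h4]
        simp only [hl.gtS]
        by_cases hD : (t ^ i) d ∈ D <;> simp [F, hD]
  rw [hl.tv h hd]
  have h1 := key m 1 le_rfl hpos (by omega)
  rw [pow_one] at h1
  rw [h1]
  have h2 : ∑ l ∈ Finset.Ico 1 n, F ((t ^ l) d) =
      ∑ e ∈ (Finset.Ico 1 n).image (fun l => (t ^ l) d), F e := by
    rw [Finset.sum_image]
    intro i hi j hj hij
    simp only [Finset.coe_Ico, Set.mem_Ico] at hi hj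
    exact hinj' hi.2 hj.2 hij
  have h3 : ∑ e ∈ (Finset.Ico 1 n).image (fun l => (t ^ l) d), F e =
    ∑ e ∈ ((Finset.Ico 1 n).image (fun l => (t ^ l) d)).filter (fun e => e ∉ D), f e := by
    rw [Finset.sum_filter]
  rw [h2, h3, ← Finset.sum_filter]
  congr 1
  ext e
  simp only [Finset.mem_filter, Finset.mem_image, Finset.mem_Ico, Finset.mem_univ, true_and]
  constructor
  · rintro ⟨⟨l, ⟨hl1, hl2⟩, rfl⟩, hD⟩
    refine ⟨?_, hlt l, hD, ⟨(l : ℤ), by rw [zpow_natCast]⟩⟩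
    by_contra hh
    rcases Nat.lt_or_eq_of_le (not_lt.1 hh) with h5 | h5
    · exact hD (h.D_d _ h5)
    · exact hmin l hl2 hl1 (Fin.ext h5)
  · rintro ⟨h5, h6, h7, h8⟩
    refine ⟨?_, h7⟩
    obtain ⟨l, -, hl⟩ := h8.exists_pow_eq'
    have h9 : (t ^ (l % n)) d = e := by
      rw [← hl]
      conv_rhs => rw [← Nat.mod_add_div l n, pow_add, pow_mul, Perm.mul_apply]
      congr 1
      exact (Perm.pow_apply_eq_self_of_apply_eq_self hfix _).symm
    refine ⟨l % n, ⟨?_, Nat.mod_lt _ hpos⟩, h9⟩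
    by_contra hh
    have : l % n = 0 := by omega
    rw [this] at h9
    have h10 : d = e := h9
    rw [h10] at h5
    omega

end

end K24


namespace K24

open Equiv Equiv.Perm

section
variable {d : Fin 32} {m w : ℕ} {D : Finset (Fin 32)} {s u : Perm (Fin 32)} {g : Fin 32 → PSL2Z}
  {S U : ℕ} {Γ : Subgroup PSL2Z}

lemma Link.fix (hl : Link m D s u S U) (h : Inv d m w D s u g) (hd : d ∉ D) (hdm : d.val < m) :
    Link m (insert d D) s u (pt S d (d + 1)) U := by
  refine ⟨fun i => ?_, hl.hU⟩
  have h1 : gt S d = 0 := (hl.gtS d).2 hd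
  have := h.m_le
  have := h.w_le
  rw [gt_pt h1 (by omega), hl.hS]
  by_cases h2 : i = d
  · subst h2; simp [h.s_nD _ hd]
  · simp [h2, Fin.val_inj]

lemma gt_pt2 (hl : Link m D s u S U) (h : Inv d m w D s u g) (hd : d ∉ D) (hdm : d.val < m)
    {e : Fin 32} (he : e ∉ D) (hde : d ≠ e) (hem : e.val < 30) (i : Fin 32) :
    gt (pt (pt S d (e + 1)) e (d + 1)) i =
      if i ∈ insert d (insert e D) then ((swap d e * s) i).val + 1 else 0 := by
  have h1 : gt S d = 0 := (hl.gtS d).2 hd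
  have h2 : gt S e = 0 := (hl.gtS e).2 he
  have := h.m_le
  have := h.w_le
  have h3 : gt (pt S d (e + 1)) e = 0 := by
    rw [gt_pt h1 (by omega), if_neg (fun hh => hde (Fin.ext hh.symm)), h2]
  rw [gt_pt h3 (by omega), gt_pt h1 (by omega), hl.hS, swap_s (h.s_nD _ hd) (h.s_nD _ he)]
  by_cases h4 : i = d
  · subst h4; simp [Fin.val_inj, hde]
  · by_cases h5 : i = e
    · subst h5; simp [h4]
    · simp [h4, h5, Fin.val_inj]

lemma Link.close (hl : Link m D s u S U) (h : Inv d m w D s u g) (hd : d ∉ D) (hdm : d.val < m)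
    {e : Fin 32} (he : e ∉ D) (hde : d ≠ e) (hem : e.val < m) :
    Link m (insert d (insert e D)) (swap d e * s) u (pt (pt S d (e + 1)) e (d + 1)) U := by
  have := h.m_le
  have := h.w_le
  exact ⟨gt_pt2 hl h hd hdm he hde (by omega), hl.hU⟩

lemma Link.gtU (hl : Link m D s u S U) {n : Fin 32} (hn : m ≤ n.val) : gt U n = 0 := by
  rw [hl.hU, if_neg (by omega)]

lemma Link.leaf (hl : Link m D s u S U) (h : Inv d m w D s u g) (hd : d ∉ D) (hdm : d.val < m)
    {n : Fin 32} (hn : n.val = m) :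
    Link (m + 1) (insert d (insert n D)) (swap d n * s) u (pt (pt S d (m + 1)) m (d + 1))
      (pt U m m) := by
  have := h.m_le
  have := h.w_le
  have hnD : n ∉ D := fun hh => by have := h.D_lt _ hh; omega
  have hdn : d ≠ n := by rintro rfl; omega
  rw [← hn]
  refine ⟨gt_pt2 hl h hd hdm hnD hdn (by omega), fun i => ?_⟩
  rw [gt_pt (hl.gtU hn.ge) n.2, hl.hU]
  have hun := h.u_ge n (by omega)
  by_cases h1 : i = n
  · subst h1; simp [hun]
  · have : i.val ≠ n.val := fun hh => h1 (Fin.ext hh)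
    rw [if_neg this]
    by_cases h2 : i.val < m
    · rw [if_pos h2, if_pos (by omega)]
    · rw [if_neg h2, if_neg (by omega)]

lemma Link.vert (hl : Link m D s u S U) (h : Inv d m w D s u g) (hd : d ∉ D) (hdm : d.val < m)
    {a b c : Fin 32} (ha : a.val = m) (hb : b.val = m + 1) (hc : c.val = m + 2) :
    Link (m + 3) (insert d (insert a D)) (swap d a * s) (swap a b * (swap b c * u))
      (pt (pt S d (m + 1)) m (d + 1))
      (pt (pt (pt U m (m + 1)) (m + 1) (m + 2)) (m + 2) m) := by
  have := h.m_le
  have := h.w_le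
  have haD : a ∉ D := fun hh => by have := h.D_lt _ hh; omega
  have hda : d ≠ a := by rintro rfl; omega
  have e1 := hl.gtU (n := a) (by omega)
  have e2 := hl.gtU (n := b) (by omega)
  have e3 := hl.gtU (n := c) (by omega)
  subst ha
  refine ⟨gt_pt2 hl h hd hdm haD hda (by omega), fun i => ?_⟩
  rw [← hb, ← hc]
  have f2 : gt (pt U a b) b = 0 := by rw [gt_pt e1 b.2, if_neg (by omega), e2]
  have f3 : gt (pt (pt U a b) b c) c = 0 := by
    rw [gt_pt f2 c.2, if_neg (by omega), gt_pt e1 b.2, if_neg (by omega), e3]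
  have hab : a ≠ b := by rintro rfl; omega
  have hac : a ≠ c := by rintro rfl; omega
  have hbc : b ≠ c := by rintro rfl; omega
  rw [gt_pt f3 a.2, gt_pt f2 c.2, gt_pt e1 b.2, hl.hU, swap_u hab hac hbc (h.u_ge _ (by omega))
    (h.u_ge _ (by omega)) (h.u_ge _ (by omega))]
  by_cases h1 : i = a
  · subst h1; simp [Fin.val_inj, hab, hac]
  · by_cases h2 : i = b
    · subst h2; simp [Fin.val_inj, h1, hbc]; omega
    · by_cases h3 : i = c
      · subst h3; simp [h1, h2, hc]
      · have g1 : i.val ≠ a.val := fun hh => h1 (Fin.ext hh)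
        have g2 : i.val ≠ b.val := fun hh => h2 (Fin.ext hh)
        have g3 : i.val ≠ c.val := fun hh => h3 (Fin.ext hh)
        simp only [h1, h2, h3, g1, g2, g3, if_false]
        by_cases h2 : i.val < a
        · rw [if_pos h2, if_pos (by omega)]
        · rw [if_neg h2, if_neg (by omega)]

lemma CC.no_fix {k : ℕ} (h : CC k Γ) {j : ℕ} (hj : j < k) (x : PSL2Z ⧸ Γ) : wd j • x ≠ x := by
  intro hx
  have h1 := h.2.1 j hj
  have : Finite (PSL2Z ⧸ Γ) := Nat.finite_of_card_ne_zero h.1.1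
  unfold nFix at h1
  rw [Nat.card_eq_zero] at h1
  rcases h1 with h1 | h1
  · exact h1.false ⟨x, hx⟩
  · exact not_finite_iff_infinite.2 h1 inferInstance

lemma CC.root {k : ℕ} (h : CC k Γ) : wd k • cs Γ 1 = cs Γ 1 := by
  rw [smul_cs, eq_comm, QuotientGroup.eq]
  simpa using h.2.2

lemma wd0 : wd 0 = Sp := rfl
lemma wd1 : wd 1 = Up := rfl
lemma wd2 : wd 2 = Tp := rfl

lemma CC.T0 (h : CC 2 Γ) : Up • cs Γ 1 = Sp • cs Γ 1 := by
  have h1 := h.root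
  rw [wd2, Tp_eq, mul_smul] at h1
  conv_rhs => rw [← h1, Sp_Sp]

lemma CC.not_S0 {k : ℕ} (h : CC k Γ) (hk : k = 0) {x} (hx : x ≠ cs Γ 1)
    (h2 : Sp • cs Γ 1 = x) : False := by
  subst hk
  exact hx (h2.symm.trans h.root)

lemma prune_F {k : ℕ} (h : Inv d m w D s u g) (hd : d ∉ D)
    (hok : ¬ okF k = true) : val k m (insert d D) s u g = 0 := by
  refine val_zero fun Γ hc hC => ?_
  have hk : k ≠ 0 := by simpa [okF] using hok
  have h1 := hc.S d (Finset.mem_insert_self _ _)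
  rw [h.s_nD _ hd] at h1
  exact hC.no_fix (j := 0) (by omega) _ h1

lemma prune_L {k : ℕ} (h : Inv d m w D s u g) (hd : d ∉ D) (hdm : d.val < m) {n : Fin 32}
    (hn : n.val = m) (hok : ¬ okL k d = true) :
    val k (m + 1) (insert d (insert n D)) (swap d n * s) u (Function.update g n (Sp * g d)) = 0 := by
  refine val_zero fun Γ hc hC => ?_
  rw [leaf_iff h hd hdm hn] at hc
  obtain ⟨hc, h1, h2⟩ := hc
  by_cases hk : k = 0
  · subst hk
    have h0 : d = 0 := by
      have : ¬ (0 < d.val) := by simpa [okL] using hok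
      exact Fin.ext (by simpa using this)
    subst h0
    refine h1 0 hdm ?_
    rw [h.g0]
    exact hC.root
  · have hk1 : k ≠ 1 := by
      intro hh; subst hh; simp [okL] at hok
    exact hC.no_fix (j := 1) (by omega) _ h2

lemma prune_V {k : ℕ} (h : Inv d m w D s u g) (hd : d ∉ D) (hdm : d.val < m) {a b c : Fin 32}
    (ha : a.val = m) (hb : b.val = m + 1) (hc : c.val = m + 2) (hok : ¬ okV k d = true) :
    val k (m + 3) (insert d (insert a D)) (swap d a * s)
        (swap a b * (swap b c * u)) (gv g d a b c) = 0 := by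
  refine val_zero fun Γ hc' hC => ?_
  rw [vert_iff h hd hdm ha hb hc] at hc'
  obtain ⟨hc', h1, h2⟩ := hc'
  have h0 : d = 0 := by
    have : ¬ (0 < d.val) := by
      intro hh; apply hok; unfold okV; simp [hh]
    exact Fin.ext (by simpa using this)
  subst h0
  rw [h.g0] at h1
  by_cases hk : k = 0
  · subst hk
    refine h1 0 hdm ?_
    rw [h.g0]
    exact hC.root
  · by_cases hk2 : k = 2
    · subst hk2
      refine h1 (u 0) (h.u_lt hdm) ?_
      rw [← hc'.U 0 hdm, h.g0, hC.T0]
    · simp [okV, hk, hk2] at hok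

lemma prune_C {k : ℕ} (hk4 : k < 4) (hl : Link m D s u S U) (h : Inv d m w D s u g) (hd : d ∉ D)
    {e : Fin 32} (he : e ∉ D) (hde : d.val < e.val) (hem : e.val < m) (hok : ¬ okC k d e U = true) :
    val k m (insert d (insert e D)) (swap d e * s) u g = 0 := by
  refine val_zero fun Γ hc hC => ?_
  have hne : d ≠ e := by rintro rfl; omega
  rw [close_iff h hd he hne] at hc
  obtain ⟨hc, h1⟩ := hc
  have hdm : d.val < m := by omega
  interval_cases k
  · have h0 : d = 0 := by
      have : ¬ (0 < d.val) := by simpa [okC] using hok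
      exact Fin.ext (by simpa using this)
    subst h0
    have h2 := hC.root
    rw [wd0, ← h.g0, h1] at h2
    exact hne (hc.inj _ _ hem hdm h2).symm
  · simp [okC] at hok
  · have h0 : d.val = 0 ∧ e.val ≠ 1 := by
      by_cases h0 : d.val = 0
      · simpa [okC, h0] using hok
      · simp [okC, h0] at hok
    have h0' : d = 0 := Fin.ext h0.1
    subst h0'
    have h2 := hC.T0
    rw [← h.g0, h1, hc.U 0 hdm] at h2
    have h3 := hc.inj _ _ (h.u_lt hdm) hem h2
    have h4 := h.u_le 0
    rw [h3] at h4
    have h5 : (0 : Fin 32).val = 0 := rfl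
    omega
  · have h0 : gt U d = e ∨ gt U e = d := by
      by_contra hh
      push Not at hh
      simp [okC, hh.1, hh.2] at hok
    rw [hl.hU, hl.hU, if_pos hdm, if_pos hem] at h0
    rcases h0 with h0 | h0
    · have h2 := hc.U d hdm
      rw [Fin.ext h0] at h2
      refine hC.no_fix (j := 2) (by omega) (cs Γ (g d)) ?_
      rw [wd2, Tp_eq, mul_smul, h2, ← h1, Sp_Sp]
    · have h2 := hc.U e hem
      rw [Fin.ext h0] at h2
      refine hC.no_fix (j := 2) (by omega) (cs Γ (g e)) ?_
      rw [wd2, Tp_eq, mul_smul, h2, ← h1]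

end

end K24


namespace K24

/-- Properties of complete tables. -/
structure Tab (S U m : ℕ) : Prop where
  m_le : m ≤ 31
  m_pos : 0 < m
  s_lt : ∀ j < m, sv S j < m
  s_sq : ∀ j < m, sv S (sv S j) = j
  u_lt : ∀ j < m, gt U j < m
  u_le : ∀ j < m, gt U j ≤ j + 1
  tree : ∀ i < m, 0 < i → sv S i < i ∨ gt U (i - 1) = i

/-- `φ` is an endomorphism of the table with `φ 0 = r`. -/
structure EndoT (S U m r : ℕ) (φ : ℕ → ℕ) : Prop where
  zero : φ 0 = r
  lt : ∀ j < m, φ j < m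
  s : ∀ j < m, φ (sv S j) = sv S (φ j)
  u : ∀ j < m, φ (gt U j) = gt U (φ j)

variable {S U m r : ℕ}

lemma gt_start (hr : r < 32) (j : ℕ) : gt r j = if j = 0 then r else 0 := by
  have h : pt 0 0 r = r := by
    show 0 ||| (r <<< (5 * 0)) = r
    simp
  have h1 := gt_pt (gt_zero 0) hr j
  rw [h, gt_zero] at h1
  exact h1

lemma autGo_sound (ht : Tab S U m) (n : ℕ) : ∀ i F, 1 ≤ i → i ≤ m → m ≤ i + n →
    autGo S U m n i F = true → gt F 0 = r → (∀ j < i, gt F j < m) → (∀ j, i ≤ j → gt F j = 0) →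
    (∀ j < i, sv S j < i → gt F (sv S j) = sv S (gt F j)) →
    (∀ j < i, gt U j < i → gt F (gt U j) = gt U (gt F j)) → ∃ φ, EndoT S U m r φ := by
  have fin : ∀ F, gt F 0 = r → (∀ j < m, gt F j < m) →
    (∀ j < m, sv S j < m → gt F (sv S j) = sv S (gt F j)) →
    (∀ j < m, gt U j < m → gt F (gt U j) = gt U (gt F j)) → ∃ φ, EndoT S U m r φ := by
    intro F h1 h2 h3 h4
    exact ⟨gt F, h1, h2, fun j hj => h3 j hj (ht.s_lt j hj), fun j hj => h4 j hj (ht.u_lt j hj)⟩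
  induction n with
  | zero =>
    intro i F hi him hmi _ h0 hlt _ hs hu
    have : i = m := by omega
    subst this
    exact fin F h0 hlt hs hu
  | succ n ih =>
    intro i F hi him hmi hgo h0 hlt hge hs hu
    rcases Nat.eq_or_lt_of_le him with him | him
    · subst him
      exact fin F h0 hlt hs hu
    rw [autGo_succ, if_neg (by omega)] at hgo
    have hv : (if sv S i < i then sv S (gt F (sv S i)) else gt U (gt F (i - 1))) < m := by
      split_ifs with h
      · exact ht.s_lt _ (hlt _ h)
      · exact ht.u_lt _ (hlt _ (by omega))
    generalize (if sv S i < i then sv S (gt F (sv S i)) else gt U (gt F (i - 1))) = v at hgo hv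
    rw [autStep_iff] at hgo
    obtain ⟨c1, c2, c3, c4⟩ := hgo
    have hm := ht.m_le
    have hF : ∀ j, gt (pt F i v) j = if j = i then v else gt F j :=
      gt_pt (hge i le_rfl) (by omega)
    refine ih (i + 1) _ (by omega) him (by omega) c4 ?_ ?_ ?_ ?_ ?_
    · rw [hF, if_neg (by omega), h0]
    · intro j hj
      rw [hF]
      split_ifs with h
      · exact hv
      · exact hlt j (by omega)
    · intro j hj
      rw [hF, if_neg (by omega)]
      exact hge j (by omega)
    · intro j hj hsj
      rcases Nat.eq_or_lt_of_le (Nat.le_of_lt_succ hj) with h | h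
      · subst h
        rw [c1 (by omega), hF j, if_pos rfl]
      · rw [hF j, if_neg (by omega)]
        rcases Nat.eq_or_lt_of_le (Nat.le_of_lt_succ hsj) with h' | h'
        · have h5 := ht.s_sq j (by omega)
          rw [h'] at h5 ⊢
          rw [h5, hF, if_neg (by omega)] at c1
          rw [c1 (by omega), ht.s_sq v hv, hF, if_pos rfl]
        · rw [hF, if_neg (by omega), hs j h h']
    · intro j hj hsj
      rcases Nat.eq_or_lt_of_le (Nat.le_of_lt_succ hj) with h | h
      · subst h
        rw [c2 (by omega), hF j, if_pos rfl]
      · rw [hF j, if_neg (by omega)]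
        rcases Nat.eq_or_lt_of_le (Nat.le_of_lt_succ hsj) with h' | h'
        · have h5 := ht.u_le j (by omega)
          have h6 : i - 1 = j := by omega
          rw [h6] at c3
          rw [h', hF, if_pos rfl, c3 h']
        · rw [hF, if_neg (by omega), hu j h h']

lemma autOK_sound (ht : Tab S U m) (hr : r < m) (h : autOK S U m r = true) :
    ∃ φ, EndoT S U m r φ := by
  rw [autOK_iff] at h
  rcases h with rfl | ⟨h1, h2, h3⟩
  · exact ⟨id, rfl, fun _ h => h, fun _ _ => rfl, fun _ _ => rfl⟩
  · have hm := ht.m_le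
    have hg := gt_start (r := r) (by omega)
    refine autGo_sound ht m 1 r le_rfl ht.m_pos (by omega) h3 (by simp [hg]) ?_ ?_ ?_ ?_
    · intro j hj
      rw [hg]; split_ifs <;> omega
    · intro j hj
      rw [hg, if_neg (by omega)]
    · intro j hj hs
      have : j = 0 := by omega
      subst this
      have h0 : sv S 0 = 0 := by omega
      rw [h0, hg, if_pos rfl, h1 h0]
    · intro j hj hs
      have : j = 0 := by omega
      subst this
      have h0 : gt U 0 = 0 := by omega
      rw [h0, hg, if_pos rfl, h2 h0]

lemma autGo_complete (ht : Tab S U m) {φ : ℕ → ℕ} (hφ : EndoT S U m r φ) (n : ℕ) : ∀ i F, 1 ≤ i →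
    (∀ j < i, gt F j = φ j) → (∀ j, i ≤ j → gt F j = 0) →
    autGo S U m n i F = true := by
  induction n with
  | zero => intros; rfl
  | succ n ih =>
    intro i F hi hlt hge
    rw [autGo_succ]
    by_cases him : m ≤ i
    · rw [if_pos him]
    rw [if_neg him]
    replace him : i < m := by omega
    have hv : (if sv S i < i then sv S (gt F (sv S i)) else gt U (gt F (i - 1))) = φ i := by
      split_ifs with h
      · rw [hlt _ h, ← hφ.s _ (ht.s_lt i him), ht.s_sq i him]
      · have h1 := (ht.tree i him hi).resolve_left h
        rw [hlt _ (by omega), ← hφ.u _ (by omega), h1]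
    rw [hv]
    have hm := ht.m_le
    have hm' := hφ.lt i him
    have hF : ∀ j, gt (pt F i (φ i)) j = if j = i then φ i else gt F j :=
      gt_pt (hge i le_rfl) (by omega)
    have hF' : ∀ j ≤ i, gt (pt F i (φ i)) j = φ j := by
      intro j hj
      rw [hF]
      split_ifs with h
      · rw [h]
      · exact hlt j (by omega)
    rw [autStep_iff]
    refine ⟨fun h => ?_, fun h => ?_, fun h => ?_, ?_⟩
    · rw [hF' _ h, hφ.s i him]
    · rw [hF' _ h, hφ.u i him]
    · rw [hlt _ (by omega), ← hφ.u _ (by omega), h]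
    · refine ih (i + 1) _ (by omega) (fun j hj => hF' j (by omega)) fun j hj => ?_
      rw [hF, if_neg (by omega)]
      exact hge j (by omega)

lemma autOK_complete (ht : Tab S U m) (hr : r < m) {φ : ℕ → ℕ} (hφ : EndoT S U m r φ) :
    autOK S U m r = true := by
  rw [autOK_iff]
  right
  have hm := ht.m_le
  have hg := gt_start (r := r) (by omega)
  refine ⟨fun h => ?_, fun h => ?_, autGo_complete ht hφ m 1 r le_rfl ?_ ?_⟩
  · have := hφ.s 0 ht.m_pos
    rw [h, hφ.zero] at this
    exact this.symm
  · have := hφ.u 0 ht.m_pos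
    rw [h, hφ.zero] at this
    exact this.symm
  · intro j hj
    have : j = 0 := by omega
    subst this
    rw [hg, if_pos rfl, hφ.zero]
  · intro j hj
    rw [hg, if_neg (by omega)]

end K24


namespace K24

open Equiv Equiv.Perm

section
variable {d : Fin 32} {m w : ℕ} {D : Finset (Fin 32)} {s u : Perm (Fin 32)} {g : Fin 32 → PSL2Z}
  {S U : ℕ} {Γ : Subgroup PSL2Z} {f : PSL2Z →* Perm (Fin 32)}

lemma Inv.full (h : Inv d m w D s u g) (hdm : d.val = m) (i : Fin 32) : i ∈ D ↔ i.val < m :=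
  ⟨h.D_lt i, fun hi => h.D_d i (by omega)⟩

lemma act_lt (h : Inv d m w D s u g) (hS : f Sp = s) (hU : f Up = u) (x : PSL2Z) :
    ∀ i : Fin 32, i.val < m → (f x i).val < m := by
  induction x using gen_induction with
  | h1 => intro i hi; rwa [map_one]
  | hS x ih => intro i hi; rw [map_mul, Perm.mul_apply, hS]; exact h.s_lt (ih i hi)
  | hU x ih => intro i hi; rw [map_mul, Perm.mul_apply, hU]; exact h.u_lt (ih i hi)

lemma act_ge (h : Inv d m w D s u g) (hS : f Sp = s) (hU : f Up = u) (x : PSL2Z) :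
    ∀ i : Fin 32, ¬ i.val < m → f x i = i := by
  induction x using gen_induction with
  | h1 => intro i hi; rw [map_one]; rfl
  | hS x ih =>
    intro i hi
    rw [map_mul, Perm.mul_apply, hS, ih i hi]
    exact h.s_nD i fun hh => hi (h.D_lt i hh)
  | hU x ih =>
    intro i hi
    rw [map_mul, Perm.mul_apply, hU, ih i hi]
    exact h.u_ge i (not_lt.1 hi)

lemma act_g (h : Inv d m w D s u g) (hS : f Sp = s) (hU : f Up = u) {i : Fin 32} (hi : i.val < m) :
    f (g i) 0 = i :=
  h.hom f (fun i _ => by rw [hS]) (fun i _ => by rw [hU]) i hi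

lemma compat_act (h : Inv d m w D s u g) (hdm : d.val = m) (hS : f Sp = s) (hU : f Up = u)
    (hc : Compat m D s u g Γ) (x : PSL2Z) :
    ∀ i : Fin 32, i.val < m → x • cs Γ (g i) = cs Γ (g (f x i)) := by
  induction x using gen_induction with
  | h1 => intro i hi; rw [map_one, one_smul]; rfl
  | hS x ih =>
    intro i hi
    rw [map_mul, Perm.mul_apply, hS, mul_smul, ih i hi]
    exact hc.S _ ((h.full hdm _).2 (act_lt h hS hU x i hi))
  | hU x ih =>
    intro i hi
    rw [map_mul, Perm.mul_apply, hU, mul_smul, ih i hi]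
    exact hc.U _ (act_lt h hS hU x i hi)

/-- The subgroup of a complete table. -/
def stab0 (f : PSL2Z →* Perm (Fin 32)) : Subgroup PSL2Z :=
  (MulAction.stabilizer (Perm (Fin 32)) (0 : Fin 32)).comap f

lemma mem_stab0 {x : PSL2Z} : x ∈ stab0 f ↔ f x 0 = 0 := Iff.rfl

lemma cs_stab0 {x y : PSL2Z} : cs (stab0 f) x = cs (stab0 f) y ↔ f x 0 = f y 0 := by
  rw [QuotientGroup.eq, mem_stab0, map_mul, map_inv, Perm.mul_apply, Perm.inv_eq_iff_eq]
  exact ⟨fun h => h.symm, fun h => h.symm⟩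

lemma compat_iff (h : Inv d m w D s u g) (hdm : d.val = m) (hS : f Sp = s) (hU : f Up = u) :
    Compat m D s u g Γ ↔ Γ = stab0 f := by
  have h0 : (0 : Fin 32).val < m := h.m_pos
  constructor
  · intro hc
    ext x
    rw [mem_stab0]
    have h1 := compat_act h hdm hS hU hc x 0 h0
    have h2 : x ∈ Γ ↔ x • cs Γ 1 = cs Γ 1 := by
      rw [smul_cs, eq_comm, QuotientGroup.eq]; simp
    rw [h2, ← h.g0, h1]
    constructor
    · exact hc.inj _ _ (act_lt h hS hU x 0 h0) h0
    · intro h; rw [h]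
  · rintro rfl
    refine ⟨fun i j hi hj hij => ?_, fun i hi => ?_, fun i hi => ?_⟩
    · rw [cs_stab0, act_g h hS hU hi, act_g h hS hU hj] at hij
      exact hij
    · rw [smul_cs, cs_stab0, map_mul, Perm.mul_apply, act_g h hS hU hi, act_g h hS hU (h.u_lt hi), hU]
    · have hi := h.D_lt i hi
      rw [smul_cs, cs_stab0, map_mul, Perm.mul_apply, act_g h hS hU hi, act_g h hS hU (h.s_lt hi), hS]

lemma exists_psi (h : Inv d m w D s u g) (hS : f Sp = s) (hU : f Up = u) :
    ∃ e : {i : Fin 32 // i.val < m} ≃ PSL2Z ⧸ stab0 f,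
      ∀ x i, x • e i = e ⟨f x i.1, act_lt h hS hU x i.1 i.2⟩ := by
  have h0 : (0 : Fin 32).val < m := h.m_pos
  refine ⟨Equiv.ofBijective (fun i => cs (stab0 f) (g i.1)) ⟨?_, ?_⟩, ?_⟩
  · intro i j hij
    have h1 : cs (stab0 f) (g i.1) = cs (stab0 f) (g j.1) := hij
    rw [cs_stab0, act_g h hS hU i.2, act_g h hS hU j.2] at h1
    exact Subtype.ext h1
  · intro y
    induction y using QuotientGroup.induction_on with
    | H y =>
      refine ⟨⟨f y 0, act_lt h hS hU y 0 h0⟩, ?_⟩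
      show cs (stab0 f) (g (f y 0)) = cs (stab0 f) y
      rw [cs_stab0, act_g h hS hU (act_lt h hS hU y 0 h0)]
  · intro x i
    show x • cs (stab0 f) (g i.1) = cs (stab0 f) (g (f x i.1))
    rw [smul_cs, cs_stab0, map_mul, Perm.mul_apply, act_g h hS hU i.2,
      act_g h hS hU (act_lt h hS hU x i.1 i.2)]

lemma card_lt (hm : m ≤ 32) : Nat.card {i : Fin 32 // i.val < m} = m := by
  have e : {i : Fin 32 // i.val < m} ≃ Fin m :=
    { toFun := fun i => ⟨i.1.val, i.2⟩
      invFun := fun i => ⟨⟨i.val, by omega⟩, i.2⟩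
      left_inv := fun _ => rfl
      right_inv := fun _ => rfl }
  rw [Nat.card_congr e, Nat.card_eq_fintype_card, Fintype.card_fin]

lemma card_ge (hm : m ≤ 32) : Nat.card {i : Fin 32 // ¬ i.val < m} = 32 - m := by
  classical
  have h := card_lt hm
  rw [Nat.card_eq_fintype_card] at h ⊢
  rw [Fintype.card_subtype_compl, h, Fintype.card_fin]

lemma Inv.m32 (h : Inv d m w D s u g) : m ≤ 27 := h.m_le.trans h.w_le

lemma st_index (h : Inv d m w D s u g) (hS : f Sp = s) (hU : f Up = u) :
    (stab0 f).index = m := by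
  obtain ⟨e, he⟩ := exists_psi h hS hU
  have := h.m32
  rw [Subgroup.index, ← Nat.card_congr e, card_lt (by omega)]

lemma st_nOrb (h : Inv d m w D s u g) (hS : f Sp = s) (hU : f Up = u) (x : PSL2Z) :
    cyc (f x) = nOrb x (stab0 f) + (32 - m) := by
  obtain ⟨e, he⟩ := exists_psi h hS hU
  have := h.m32
  rw [nOrb_eq, ← card_ge (m := m) (by omega)]
  refine cyc_sub (f x) _ (fun i => i.val < m) e (act_ge h hS hU x) (act_lt h hS hU x) ?_
  intro a
  exact (he x a).symm

lemma st_nFix (h : Inv d m w D s u g) (hS : f Sp = s) (hU : f Up = u) (x : PSL2Z) :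
    nFix x (stab0 f) = (Finset.univ.filter fun i : Fin 32 => i.val < m ∧ f x i = i).card := by
  classical
  obtain ⟨e, he⟩ := exists_psi h hS hU
  have e1 : {y : PSL2Z ⧸ stab0 f // x • y = y} ≃ {i : {i : Fin 32 // i.val < m} // f x i.1 = i.1} :=
    (e.subtypeEquiv fun i => by
      rw [he, e.apply_eq_iff_eq, Subtype.ext_iff]).symm
  unfold nFix
  rw [Nat.card_congr e1, Nat.card_congr (Equiv.subtypeSubtypeEquivSubtypeInter
    (fun i : Fin 32 => i.val < m) (fun i => f x i = i)), Nat.card_eq_fintype_card,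
    Fintype.card_subtype]

lemma SpTp : Sp * Tp = Up := rfl

lemma st_PP (h : Inv d m w D s u g) (hdm : d.val = m) (hS : f Sp = s) (hU : f Up = u) :
    PP (stab0 f) ↔ AA m s u = 98 ∧ w = 24 := by
  have hm := h.m_pos
  have hm' := h.m32
  have a1 := st_nOrb h hS hU Sp
  have a2 := st_nOrb h hS hU Up
  have a3 := st_nOrb h hS hU Tp
  rw [Tp_eq, map_mul, ← Tp_eq] at a3
  rw [hS] at a1 a3
  rw [hU] at a2 a3
  have hw : tfIdx (stab0 f) = w := by
    rw [← h.wt]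
    unfold tfIdx
    rw [st_index h hS hU, SpTp, st_nFix h hS hU, st_nFix h hS hU, hS, hU]
    have : D.filter (fun i => s i = i) = Finset.univ.filter fun i : Fin 32 => i.val < m ∧ s i = i := by
      ext i
      simp [h.full hdm]
    rw [this]
  unfold PP GenusZero AA
  rw [hw, st_index h hS hU, SpTp]
  omega

lemma card_range_fin (hm : m ≤ 32) (P : ℕ → Prop) [DecidablePred P] :
    (Finset.univ.filter fun i : Fin 32 => i.val < m ∧ P i.val).card =
      ((Finset.range m).filter P).card := by
  refine Finset.card_bij (fun i _ => i.val) ?_ ?_ ?_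
  · intro i hi
    simpa using hi
  · intro i _ j _ hij
    exact Fin.ext hij
  · intro b hb
    simp only [Finset.mem_filter, Finset.mem_range] at hb
    exact ⟨⟨b, by omega⟩, by simpa using hb, rfl⟩

lemma Link.sv (hl : Link m D s u S U) {i : Fin 32} (hi : i ∈ D) : sv S i = (s i).val := by
  show gt S i - 1 = _
  rw [hl.hS, if_pos hi]
  rfl

lemma root_eq (hl : Link m D s u S U) (h : Inv d m w D s u g) (hdm : d.val = m)
    (hS : f Sp = s) (hU : f Up = u) (k : ℕ) {i : Fin 32} (hi : i.val < m) :
    rootFn k S U i = (f (wd k) i).val := by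
  have hs : ∀ {i : Fin 32}, i.val < m → K24.sv S i = (s i).val := fun hi =>
    hl.sv ((h.full hdm _).2 hi)
  have hu : gt U i = (u i).val := by rw [hl.hU, if_pos hi]
  by_cases h0 : k = 0
  · subst h0
    rw [wd0, hS]
    exact hs hi
  by_cases h1 : k = 1
  · subst h1
    rw [wd1, hU]
    exact hu
  by_cases h2 : k = 2
  · subst h2
    rw [wd2, Tp_eq, map_mul, hS, hU]
    show K24.sv S (gt U i) = _
    rw [hu, hs (h.u_lt hi)]
    rfl
  · have e1 : Nat.beq k 0 = false := Bool.eq_false_iff.2 (by rw [Ne, beqN]; exact h0)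
    have e2 : Nat.beq k 1 = false := Bool.eq_false_iff.2 (by rw [Ne, beqN]; exact h1)
    have e3 : Nat.beq k 2 = false := Bool.eq_false_iff.2 (by rw [Ne, beqN]; exact h2)
    unfold rootFn wd
    rw [e1, e2, e3, if_neg h0, if_neg h1, if_neg h2, map_one]
    rfl

lemma st_fixc (hl : Link m D s u S U) (h : Inv d m w D s u g) (hdm : d.val = m)
    (hS : f Sp = s) (hU : f Up = u) (k : ℕ) :
    nFix (wd k) (stab0 f) = fixc m (rootFn k S U) := by
  have := h.m32
  rw [st_nFix h hS hU, fixc_eq, ← card_range_fin (by omega)]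
  congr 1
  ext i
  simp only [Finset.mem_filter, Finset.mem_univ, true_and]
  refine and_congr_right fun hi => ?_
  rw [root_eq hl h hdm hS hU k hi, Fin.val_inj]

lemma mk_tab (hl : Link m D s u S U) (h : Inv d m w D s u g) (hdm : d.val = m) : Tab S U m := by
  have hm := h.m32
  have hs : ∀ {i : Fin 32}, i.val < m → K24.sv S i = (s i).val := fun hi =>
    hl.sv ((h.full hdm _).2 hi)
  have hu : ∀ {i : Fin 32}, i.val < m → gt U i = (u i).val := fun hi => by rw [hl.hU, if_pos hi]
  have lift : ∀ {j}, j < m → ∃ i : Fin 32, i.val = j := fun {j} hj => ⟨⟨j, by omega⟩, rfl⟩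
  refine ⟨by omega, h.m_pos, ?_, ?_, ?_, ?_, ?_⟩
  · intro j hj
    obtain ⟨i, rfl⟩ := lift hj
    rw [hs hj]; exact h.s_lt hj
  · intro j hj
    obtain ⟨i, rfl⟩ := lift hj
    rw [hs hj, hs (h.s_lt hj), h.s_sq]
  · intro j hj
    obtain ⟨i, rfl⟩ := lift hj
    rw [hu hj]; exact h.u_lt hj
  · intro j hj
    obtain ⟨i, rfl⟩ := lift hj
    rw [hu hj]; exact h.u_le i
  · intro j hj h0
    obtain ⟨i, rfl⟩ := lift hj
    rw [hs hj]
    refine (h.tree i h0 hj).imp (fun h => h.2) ?_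
    rintro ⟨j, h1, h2⟩
    have : i.val - 1 = j.val := by omega
    rw [this, hu (by omega), h2]

lemma aut_iff (hl : Link m D s u S U) (h : Inv d m w D s u g) (hdm : d.val = m)
    (hS : f Sp = s) (hU : f Up = u) {r : Fin 32} (hr : r.val < m) :
    autOK S U m r = true ↔ ∀ x, f x r = r ↔ f x 0 = 0 := by
  have hm := h.m32
  have h0 : (0 : Fin 32).val < m := h.m_pos
  have ht := mk_tab hl h hdm
  have hs : ∀ {i : Fin 32}, i.val < m → K24.sv S i = (s i).val := fun hi =>
    hl.sv ((h.full hdm _).2 hi)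
  have hu : ∀ {i : Fin 32}, i.val < m → gt U i = (u i).val := fun hi => by rw [hl.hU, if_pos hi]
  have hlt := act_lt h hS hU
  constructor
  · intro hok
    obtain ⟨φ, hφ⟩ := autOK_sound ht hr hok
    have key : ∀ x, φ (f x 0).val = (f x r).val := by
      intro x
      induction x using gen_induction with
      | h1 => rw [map_one]; exact hφ.zero
      | hS x ih =>
        rw [map_mul, Perm.mul_apply, Perm.mul_apply, hS, ← hs (hlt x 0 h0), hφ.s _ (hlt x 0 h0), ih,
          hs (hlt x r hr)]
      | hU x ih =>
        rw [map_mul, Perm.mul_apply, Perm.mul_apply, hU, ← hu (hlt x 0 h0), hφ.u _ (hlt x 0 h0), ih,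
          hu (hlt x r hr)]
    have hsurj : Function.Surjective
        (fun i : {i : Fin 32 // i.val < m} =>
          (⟨⟨φ i.1.val, by have := hφ.lt _ i.2; omega⟩, hφ.lt _ i.2⟩ : {i : Fin 32 // i.val < m})) := by
      rintro ⟨j, hj⟩
      refine ⟨⟨f (g j * (g r)⁻¹) 0, hlt _ 0 h0⟩, ?_⟩
      apply Subtype.ext
      apply Fin.ext
      show φ (f (g j * (g r)⁻¹) 0).val = j.val
      rw [key, map_mul, map_inv, Perm.mul_apply]
      have : (f (g r))⁻¹ r = 0 := by rw [Perm.inv_eq_iff_eq, act_g h hS hU hr]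
      rw [this, act_g h hS hU hj]
    have hinj := Finite.injective_iff_surjective.2 hsurj
    intro x
    constructor
    · intro hx
      have h1 := key x
      have h2 := @hinj ⟨f x 0, hlt x 0 h0⟩ ⟨0, h0⟩ (by
        apply Subtype.ext
        apply Fin.ext
        show φ (f x 0).val = φ 0
        rw [h1, hx, hφ.zero])
      exact congrArg Subtype.val h2
    · intro hx
      have h1 := key x
      rw [hx] at h1
      exact Fin.ext (h1.symm.trans hφ.zero)
  · intro hx
    have key : ∀ x y, f x 0 = f y 0 → f x r = f y r := by
      intro x y hxy
      have h1 := (hx (x⁻¹ * y)).2 (by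
        rw [map_mul, map_inv, Perm.mul_apply, ← hxy, Perm.inv_eq_iff_eq])
      rw [map_mul, map_inv, Perm.mul_apply, Perm.inv_eq_iff_eq] at h1
      exact h1.symm
    let φ : ℕ → ℕ := fun j => if hj : j < 32 then (f (g ⟨j, hj⟩) r).val else 0
    have hφ : ∀ j : Fin 32, φ j = (f (g j) r).val := fun j => by
      simp [φ]
    have lift : ∀ {j}, j < m → ∃ i : Fin 32, i.val = j := fun {j} hj => ⟨⟨j, by omega⟩, rfl⟩
    refine autOK_complete (φ := φ) ht hr ⟨?_, ?_, ?_, ?_⟩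
    · have := hφ 0
      rw [h.g0, map_one] at this
      exact this
    · intro j hj
      obtain ⟨i, rfl⟩ := lift hj
      rw [hφ]; exact hlt _ _ hr
    · intro j hj
      obtain ⟨i, rfl⟩ := lift hj
      rw [hs hj, hφ, hφ, hs (hlt _ _ hr), key (g (s i)) (Sp * g i), map_mul, hS, Perm.mul_apply]
      rw [map_mul, hS, Perm.mul_apply, act_g h hS hU hj, act_g h hS hU (h.s_lt hj)]
    · intro j hj
      obtain ⟨i, rfl⟩ := lift hj
      rw [hu hj, hφ, hφ, hu (hlt _ _ hr), key (g (u i)) (Up * g i), map_mul, hU, Perm.mul_apply]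
      rw [map_mul, hU, Perm.mul_apply, act_g h hS hU hj, act_g h hS hU (h.u_lt hj)]

lemma st_aN (hl : Link m D s u S U) (h : Inv d m w D s u g) (hdm : d.val = m)
    (hS : f Sp = s) (hU : f Up = u) {k : ℕ} (hk : rootFn k S U 0 = 0) :
    aN (stab0 f) =
      ((Finset.range m).filter fun r => rootFn k S U r = r ∧ autOK S U m r = true).card := by
  classical
  have hm := h.m32
  have h0 : (0 : Fin 32).val < m := h.m_pos
  obtain ⟨e, he⟩ := exists_psi h hS hU
  have e1 : {y : PSL2Z ⧸ stab0 f // MulAction.stabilizer PSL2Z y = stab0 f} ≃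
      {i : {i : Fin 32 // i.val < m} // autOK S U m i.1 = true} :=
    (e.subtypeEquiv fun i => by
      rw [aut_iff hl h hdm hS hU i.2, SetLike.ext_iff]
      refine forall_congr' fun x => ?_
      rw [MulAction.mem_stabilizer_iff, mem_stab0, he, e.apply_eq_iff_eq, Subtype.ext_iff]).symm
  unfold aN
  rw [Nat.card_congr e1, Nat.card_congr (Equiv.subtypeSubtypeEquivSubtypeInter
    (fun i : Fin 32 => i.val < m) (fun i => autOK S U m i = true)), Nat.card_eq_fintype_card,
    Fintype.card_subtype, ← card_range_fin (by omega)]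
  congr 1
  ext i
  simp only [Finset.mem_filter, Finset.mem_univ, true_and]
  refine and_congr_right fun hi => ?_
  constructor
  · intro hok
    refine ⟨?_, hok⟩
    rw [root_eq hl h hdm hS hU k hi]
    have h2 := root_eq hl h hdm hS hU k h0
    rw [((aut_iff hl h hdm hS hU hi).1 hok _).2]
    apply Fin.ext
    rw [← h2]
    exact hk
  · exact fun h => h.2

lemma val_leaf (hl : Link m D s u S U) (h : Inv d m w D s u g) (hdm : d.val = m) (k : ℕ) :
    val k m D s u g = if AA m s u = 98 then (leaf k m w S U : ENNReal) else 0 := by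
  classical
  have h0 : (0 : Fin 32).val < m := h.m_pos
  obtain ⟨f, hS, hU⟩ := exists_hom (s := s) (u := u) (Equiv.ext h.s_sq) (Equiv.ext h.u_cu)
  have h1 : val k m D s u g = WW k (stab0 f) := by
    unfold val
    simp only [compat_iff h hdm hS hU]
    rw [tsum_eq_single (stab0 f), if_pos rfl]
    intro Γ hΓ
    rw [if_neg hΓ]
  have h2 : CC k (stab0 f) ↔ AA m s u = 98 ∧ (w = 24 ∧ rootFn k S U 0 = 0 ∧
      ∑ j ∈ Finset.range k, fixc m (rootFn j S U) = 0) := by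
    unfold CC
    rw [st_PP h hdm hS hU, mem_stab0, Finset.sum_eq_zero_iff]
    simp only [st_fixc hl h hdm hS hU, Finset.mem_range]
    have h3 : f (wd k) 0 = 0 ↔ rootFn k S U 0 = 0 := by
      have h2 := root_eq hl h hdm hS hU k h0
      rw [Fin.ext_iff, ← h2]
      rfl
    rw [h3]
    tauto
  rw [h1, leaf_eq]
  unfold WW
  by_cases hA : AA m s u = 98
  · rw [if_pos hA]
    congr 1
    by_cases hB : w = 24 ∧ rootFn k S U 0 = 0 ∧
      ∑ j ∈ Finset.range k, fixc m (rootFn j S U) = 0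
    · rw [if_pos hB, if_pos (h2.2 ⟨hA, hB⟩), st_fixc hl h hdm hS hU, st_aN hl h hdm hS hU hB.2.1]
    · rw [if_neg hB, if_neg fun hh => hB (h2.1 hh).2]
  · rw [if_neg hA, if_neg fun hh => hA (h2.1 hh).1, Nat.cast_zero]

end

end K24


namespace K24

open Equiv Equiv.Perm

lemma main_ind {k : ℕ} (hk : k < 4) (n : ℕ) : ∀ (d m w : ℕ) (D : Finset (Fin 32))
    (s u : Perm (Fin 32)) (g : Fin 32 → PSL2Z) (S U : ℕ), Inv d m w D s u g → Link m D s u S U →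
    25 ≤ d + n → AA m s u ≤ 98 →
    val k m D s u g = if AA m s u = 98 then (go k n d m w S U : ENNReal) else 0 := by
  induction n with
  | zero =>
    intro d m w D s u g S U h hl hn hA
    have h1 := h.m_le
    have h2 := h.d_le
    have h3 := h.w_le
    obtain ⟨d, rfl⟩ : ∃ d' : Fin 32, d'.val = d := ⟨⟨d, by omega⟩, rfl⟩
    rw [val_big h (by omega), go_zero]
    simp
  | succ n ih =>
    intro d m w D s u g S U h hl hn hA
    have h1 := h.m_le
    have h2 := h.d_le
    have h3 := h.w_le
    obtain ⟨d, rfl⟩ : ∃ d' : Fin 32, d'.val = d := ⟨⟨d, by omega⟩, rfl⟩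
    rw [go_succ]
    by_cases hw : w ≤ 24
    swap
    · rw [val_big h (by omega), if_neg hw]
      simp
    rw [if_pos hw]
    by_cases hdm : d.val = m
    · rw [if_pos hdm]
      exact val_leaf hl h hdm k
    rw [if_neg hdm]
    replace hdm : d.val < m := by omega
    by_cases hd : d ∈ D
    · rw [if_neg (fun hh => (hl.gtS d).1 hh hd)]
      exact ih _ _ _ _ _ _ _ _ _ (h.skip hd) hl (by omega) hA
    rw [if_pos ((hl.gtS d).2 hd)]
    obtain ⟨a, ha⟩ : ∃ a : Fin 32, a.val = m := ⟨⟨m, by omega⟩, rfl⟩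
    obtain ⟨b, hb⟩ : ∃ a : Fin 32, a.val = m + 1 := ⟨⟨m + 1, by omega⟩, rfl⟩
    obtain ⟨c, hc⟩ : ∃ a : Fin 32, a.val = m + 2 := ⟨⟨m + 2, by omega⟩, rfl⟩
    rw [val_branch h hd hdm ha hb hc, walk_eq hl h hdm]
    have cF : val k m (insert d D) s u g = if AA m s u = 98 then
        ((if 24 ≤ w then 0 else if okF k = true then
          go k n (d + 1) m (w + 3) (pt S d (d + 1)) U else 0 : ℕ) : ENNReal) else 0 := by
      by_cases hw' : 24 ≤ w
      · have hi := h.fix hd hdm hw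
        have := hi.d_le
        obtain ⟨d', hd'⟩ : ∃ d' : Fin 32, d'.val = d.val + 1 := ⟨⟨d + 1, by omega⟩, rfl⟩
        rw [← hd'] at hi
        rw [val_big hi (by omega), if_pos hw']
        simp
      rw [if_neg hw']
      by_cases ho : okF k = true
      · rw [if_pos ho]
        exact ih _ _ _ _ _ _ _ _ _ (h.fix hd hdm hw) (hl.fix h hd hdm) (by omega) hA
      · rw [if_neg ho, prune_F h hd ho]; simp
    have cL : val k (m + 1) (insert d (insert a D)) (swap d a * s) u
        (Function.update g a (Sp * g d)) = if AA m s u = 98 then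
        ((if 24 ≤ w then 0 else if okL k d = true then go k n (d + 1) (m + 1) (w + 3)
                (pt (pt S d (m + 1)) m (d + 1)) (pt U m m) else 0 : ℕ) : ENNReal) else 0 := by
      by_cases hw' : 24 ≤ w
      · have hi := h.leaf hd hdm hw ha
        have := hi.d_le
        obtain ⟨d', hd'⟩ : ∃ d' : Fin 32, d'.val = d.val + 1 := ⟨⟨d + 1, by omega⟩, rfl⟩
        rw [← hd'] at hi
        rw [val_big hi (by omega), if_pos hw']
        simp
      rw [if_neg hw']
      by_cases ho : okL k d = true
      · rw [if_pos ho, ← AA_leaf h hdm ha]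
        exact ih _ _ _ _ _ _ _ _ _ (h.leaf hd hdm hw ha) (hl.leaf h hd hdm ha) (by omega)
          (by rw [AA_leaf h hdm ha]; exact hA)
      · rw [if_neg ho, prune_L h hd hdm ha ho]; simp
    have cV : val k (m + 3) (insert d (insert a D)) (swap d a * s)
        (swap a b * (swap b c * u)) (gv g d a b c) = if AA m s u = 98 then
        ((if 24 ≤ w then 0 else if okV k d = true then go k n (d + 1) (m + 3) (w + 3)
                (pt (pt S d (m + 1)) m (d + 1))
                (pt (pt (pt U m (m + 1)) (m + 1) (m + 2)) (m + 2) m) else 0 : ℕ) : ENNReal)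
        else 0 := by
      by_cases hw' : 24 ≤ w
      · have hi := h.vert hd hdm hw ha hb hc
        have := hi.d_le
        obtain ⟨d', hd'⟩ : ∃ d' : Fin 32, d'.val = d.val + 1 := ⟨⟨d + 1, by omega⟩, rfl⟩
        rw [← hd'] at hi
        rw [val_big hi (by omega), if_pos hw']
        simp
      rw [if_neg hw']
      by_cases ho : okV k d = true
      · rw [if_pos ho, ← AA_vert h hdm ha hb hc]
        exact ih _ _ _ _ _ _ _ _ _ (h.vert hd hdm hw ha hb hc) (hl.vert h hd hdm ha hb hc) (by omega)
          (by rw [AA_vert h hdm ha hb hc]; exact hA)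
      · rw [if_neg ho, prune_V h hd hdm ha hb hc ho]; simp
    have cC : ∀ e : Fin 32, (if d.val < e.val ∧ e.val < m ∧ e ∉ D then
        val k m (insert d (insert e D)) (swap d e * s) u g else 0) =
        if AA m s u = 98 then
        ((if d.val < e.val ∧ e.val < m ∧ e ∉ D ∧ (s * u).SameCycle d e then
          (if okC k d e U = true then
            go k n (d + 1) m w (pt (pt S d (e + 1)) e (d + 1)) U else 0) else 0 : ℕ) : ENNReal)
        else 0 := by
      intro e
      by_cases h4 : d.val < e.val ∧ e.val < m ∧ e ∉ D
      swap
      · rw [if_neg h4, if_neg (c := d.val < e.val ∧ e.val < m ∧ e ∉ D ∧ (s * u).SameCycle d e)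
          fun hh => h4 ⟨hh.1, hh.2.1, hh.2.2.1⟩]
        simp
      obtain ⟨h5, h6, h7⟩ := h4
      have hde : d ≠ e := by rintro rfl; omega
      have hAA := AA_close h hd h7 hde
      rw [if_pos ⟨h5, h6, h7⟩]
      by_cases h8 : (s * u).SameCycle d e
      · rw [if_pos (c := d.val < e.val ∧ e.val < m ∧ e ∉ D ∧ (s * u).SameCycle d e) ⟨h5, h6, h7, h8⟩]
        by_cases ho : okC k d e U = true
        · rw [if_pos ho, ← hAA.1 h8]
          exact ih _ _ _ _ _ _ _ _ _ (h.close hd h7 h5 h6) (hl.close h hd hdm h7 hde h6) (by omega)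
            (by rw [hAA.1 h8]; exact hA)
        · rw [if_neg ho, prune_C hk hl h hd h7 h5 h6 ho]; simp
      · rw [if_neg (c := d.val < e.val ∧ e.val < m ∧ e ∉ D ∧ (s * u).SameCycle d e) fun hh => h8 hh.2.2.2]
        have h9 := hAA.2 h8
        rw [ih _ _ _ _ _ _ _ _ _ (h.close hd h7 h5 h6) (hl.close h hd hdm h7 hde h6) (by omega)
          (by omega), if_neg (by omega)]
        simp
    rw [cF, cL, cV, Finset.sum_congr rfl fun e _ => cC e]
    by_cases hA' : AA m s u = 98
    · simp only [if_pos hA']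
      rw [← Nat.cast_sum, ← Nat.cast_add, ← Nat.cast_add, ← Nat.cast_add]
      congr 2
      split_ifs <;> rfl
    · simp [hA']

end K24


namespace K24

open Equiv Equiv.Perm

lemma inv1 : Inv 0 1 3 ∅ 1 1 (fun _ => 1) where
  m_pos := by decide
  m_le := by decide
  w_le := by decide
  d_le := by decide
  D_lt := by simp
  s_nD := fun _ _ => rfl
  D_d := fun i hi => absurd hi (Nat.not_lt_zero _)
  s_sq := fun _ => rfl
  u_cu := fun _ => rfl
  u_ge := fun _ _ => rfl
  u_le := fun i => Nat.le_succ _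
  tree := fun i h1 h2 => by omega
  wt := by decide
  g0 := rfl
  hom := fun f _ _ i hi => by
    rw [map_one]
    exact Fin.ext (by have : (0 : Fin 32).val = 0 := rfl
                      rw [Perm.one_apply]; omega)

/-- The three-cycle at the start. -/
def u3 : Perm (Fin 32) := swap 0 1 * (swap 1 2 * 1)

/-- Coset representatives at the start. -/
noncomputable def g3 : Fin 32 → PSL2Z := fun i => if i = 1 then Up else if i = 2 then Up * Up else 1

lemma u3_0 : u3 0 = 1 := by decide
lemma u3_1 : u3 1 = 2 := by decide
lemma u3_2 : u3 2 = 0 := by decide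
lemma lt3 {i : Fin 32} (hi : i.val < 3) : i = 0 ∨ i = 1 ∨ i = 2 := by
  revert i; decide

lemma g3_0 : g3 0 = 1 := rfl
lemma g3_1 : g3 1 = Up := rfl
lemma g3_2 : g3 2 = Up * Up := rfl

lemma inv3 : Inv 0 3 3 ∅ 1 u3 g3 where
  m_pos := by decide
  m_le := by decide
  w_le := by decide
  d_le := by decide
  D_lt := by simp
  s_nD := fun _ _ => rfl
  D_d := fun i hi => absurd hi (Nat.not_lt_zero _)
  s_sq := fun _ => rfl
  u_cu := by decide
  u_ge := by decide
  u_le := by decide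
  tree := by decide
  wt := by decide
  g0 := rfl
  hom := fun f _ h i hi => by
    have h0 := h 0 (by decide)
    have h1 := h 1 (by decide)
    rw [u3_0] at h0
    rw [u3_1] at h1
    rcases lt3 hi with rfl | rfl | rfl
    · rw [g3_0, map_one]; rfl
    · rw [g3_1, h0]
    · rw [g3_2, map_mul, Perm.mul_apply, h0, h1]

lemma link1 : Link 1 ∅ 1 1 0 0 where
  hS := fun i => by simp [gt_zero]
  hU := fun i => by
    rw [gt_zero]
    split_ifs with h
    · rw [Perm.one_apply]; omega
    · rfl

lemma link3 : Link 3 ∅ 1 u3 0 U3 where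
  hS := fun i => by simp [gt_zero]
  hU := by decide

lemma AA1 : AA 1 1 1 = 98 := by
  unfold AA
  rw [mul_one, cyc_one, Nat.card_eq_fintype_card, Fintype.card_fin]

lemma AA3 : AA 3 1 u3 = 98 := by
  unfold AA u3
  have h1 := cyc_swap_fixed (p := swap 1 2 * (1 : Perm (Fin 32))) (a := 1) (b := 0)
    (by decide) (by decide)
  have h2 := cyc_swap_fixed (p := (1 : Perm (Fin 32))) (a := 1) (b := 2) (by decide) (by decide)
  rw [swap_comm (1 : Fin 32) 0] at h1
  rw [one_mul]
  rw [cyc_one, Nat.card_eq_fintype_card, Fintype.card_fin] at *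
  omega

variable {Γ : Subgroup PSL2Z}

lemma fix_one {x : PSL2Z} : x • cs Γ 1 = cs Γ 1 ↔ x ∈ Γ := by
  rw [smul_cs, eq_comm, QuotientGroup.eq]; simp

lemma compat1 : Compat 1 ∅ 1 1 (fun _ => 1) Γ ↔ Up ∈ Γ := by
  constructor
  · intro h
    exact fix_one.1 (h.U 0 (by decide))
  · intro h
    exact ⟨fun i j hi hj _ => Fin.ext (by omega), fun i _ => fix_one.2 h, by simp⟩

lemma compat3 : Compat 3 ∅ 1 u3 g3 Γ ↔ Up ∉ Γ := by
  constructor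
  · intro h hU
    have h1 := h.U 0 (by decide)
    rw [u3_0, g3_0, fix_one.2 hU, ← g3_0] at h1
    have := h.inj 0 1 (by decide) (by decide) h1
    exact absurd this (by decide)
  · intro hU
    have e1 : cs Γ (g3 1) = Up • cs Γ (g3 0) := by rw [g3_1, g3_0, smul_cs, mul_one]
    have e2 : cs Γ (g3 2) = Up • Up • cs Γ (g3 0) := by
      rw [g3_2, g3_0, smul_cs, smul_cs, mul_one]
    have e0 : cs Γ (g3 0) = Up • Up • Up • cs Γ (g3 0) := (Up_Up _).symm
    have n0 : Up • cs Γ (g3 0) ≠ cs Γ (g3 0) := fun h => hU (fix_one.1 h)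
    have n1 : Up • Up • cs Γ (g3 0) ≠ Up • cs Γ (g3 0) := fun h => n0 (smul_left_cancel _ h)
    have n2 : Up • Up • cs Γ (g3 0) ≠ cs Γ (g3 0) := fun h => n0 (by
      conv_rhs => rw [e0]
      rw [h])
    refine ⟨?_, ?_, by simp⟩
    · intro i j hi hj hij
      rcases lt3 hi with rfl | rfl | rfl <;> rcases lt3 hj with rfl | rfl | rfl <;>
        first
        | rfl
        | (exfalso; simp only [e1, e2] at hij
           first
           | exact n0 hij
           | exact n0 hij.symm
           | exact n1 hij
           | exact n1 hij.symm
           | exact n2 hij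
           | exact n2 hij.symm)
    · intro i hi
      rcases lt3 hi with rfl | rfl | rfl
      · rw [u3_0, e1]
      · rw [u3_1, e1, e2]
      · rw [u3_2, e2, ← e0]

lemma total (k : ℕ) : ∑' Γ : Subgroup PSL2Z, (WW k Γ : ENNReal) =
    val k 1 ∅ 1 1 (fun _ => 1) + val k 3 ∅ 1 u3 g3 := by
  unfold val
  rw [← ENNReal.tsum_add]
  refine tsum_congr fun Γ => ?_
  by_cases h : Up ∈ Γ
  · rw [if_pos (compat1.2 h), if_neg fun hh => compat3.1 hh h, add_zero]
  · rw [if_neg fun hh => h (compat1.1 hh), if_pos (compat3.2 h), zero_add]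

lemma val1 {k : ℕ} (hk : k < 4) : val k 1 ∅ 1 1 (fun _ => 1) = go k 25 0 1 3 0 0 := by
  rw [main_ind hk 25 0 1 3 ∅ 1 1 _ 0 0 inv1 link1 le_rfl AA1.le, if_pos AA1]

lemma val3 {k : ℕ} (hk : k < 4) : val k 3 ∅ 1 u3 g3 = go k 25 0 3 3 0 U3 := by
  rw [main_ind hk 25 0 3 3 ∅ 1 u3 _ 0 U3 inv3 link3 le_rfl AA3.le, if_pos AA3]

lemma total_tot {k : ℕ} (hk : k < 4) : ∑' Γ : Subgroup PSL2Z, (WW k Γ : ENNReal) = (tot k : ℕ) := by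
  rw [total]
  have z1 : 2 ≤ k → val k 1 ∅ 1 1 (fun _ => 1) = 0 := fun h2 => val_zero fun Γ hc hC =>
    hC.no_fix (j := 1) (by omega) _ (fix_one.2 (compat1.1 hc))
  have z3 : k = 1 → val k 3 ∅ 1 u3 g3 = 0 := by
    rintro rfl
    exact val_zero fun Γ hc hC => compat3.1 hc hC.2.2
  by_cases h1 : k = 1
  · rw [z3 h1, val1 hk, add_zero]
    subst h1
    rw [tot, show Nat.beq 1 1 = true from rfl, cond_true]
  by_cases h0 : k = 0
  · rw [val1 hk, val3 hk, ← Nat.cast_add]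
    subst h0
    rw [tot, show Nat.beq 0 1 = false from rfl, show Nat.beq 0 0 = true from rfl, cond_false,
      cond_true, Nat.add_eq]
  · rw [z1 (by omega), zero_add, val3 hk]
    have e0 : Nat.beq k 0 = false := Bool.eq_false_iff.2 (by rw [Ne, beqN]; exact h0)
    have e1 : Nat.beq k 1 = false := Bool.eq_false_iff.2 (by rw [Ne, beqN]; exact h1)
    rw [tot, e0, e1, cond_false, cond_false]

set_option maxRecDepth 100000 in
theorem tot_0 : Nat.beq (tot 0) (Nat.mul KK 2051) = true := by decide +kernel

set_option maxRecDepth 100000 in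
theorem tot_1 : Nat.beq (tot 1) (Nat.mul KK 720) = true := by decide +kernel

set_option maxRecDepth 100000 in
theorem tot_2 : Nat.beq (tot 2) (Nat.mul KK 171) = true := by decide +kernel

set_option maxRecDepth 100000 in
theorem tot_3 : Nat.beq (tot 3) (Nat.mul KK 20) = true := by decide +kernel

lemma final (t : ℕ → ℕ) (K : ℕ)
    (h : ∀ k < 4, ∑' Γ : Subgroup PSL2Z, (WW k Γ : ENNReal) = (t k : ℕ)) (hK : K = KK)
    (h0 : Nat.beq (t 0) (Nat.mul K 2051) = true) (h1 : Nat.beq (t 1) (Nat.mul K 720) = true)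
    (h2 : Nat.beq (t 2) (Nat.mul K 171) = true) (h3 : Nat.beq (t 3) (Nat.mul K 20) = true) :
    countClasses PP = 2962 := by
  rw [beqN, Nat.mul_eq] at h0 h1 h2 h3
  apply count_formula
  have hs : ∑ k ∈ Finset.range 4, t k = 2962 * K := by
    rw [Finset.sum_range_succ, Finset.sum_range_succ, Finset.sum_range_succ, Finset.sum_range_succ,
      Finset.sum_range_zero, h0, h1, h2, h3]
    ring
  rw [Finset.sum_congr rfl fun k hk => h k (Finset.mem_range.1 hk), ← Nat.cast_sum, hs, hK]

theorem count_PP : countClasses PP = 2962 :=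
  final tot KK (fun _ hk => total_tot hk) rfl tot_0 tot_1 tot_2 tot_3

end K24

/-- There are exactly 2962 conjugacy classes of genus-zero finite-index subgroups `Γ` of
`PSL(2,ℤ)` with `n + 3e₂ + 2e₃ = 24`. -/
theorem count_K24 :
    countClasses (fun Γ => Γ.index ≠ 0 ∧ GenusZero Γ ∧ tfIdx Γ = 24) = 2962 := by
  exact K24.count_PP
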